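/- arXiv:1511.01937 — 2 statements merged into one kernel-verified Lean document; each statement's English description precedes it below -/
import Mathlib

section
/- Let f : D → {0,1} be a partial function with D ⊆ [M]^n, and let f_CS be the cheat sheet version of f built from a certifying function for f with c = 10·log₂ n copies of f. Then Q(f_CS) = Ω(Q(f)). -/
open scoped BigOperators ENNReal

namespace QC

/-! ### Inputs and partial functions -/

/-- An input assigns to each index `i` a symbol from the alphabet `Fin (α i)`. -/
abbrev Input (ι : Type) (α : ι → ℕ) := ∀ i : ι, Fin (α i)

/-- A (possibly partial) Boolean-valued query function; `none` means the input
is outside the promise/domain. -/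
abbrev PartialFn (ι : Type) (α : ι → ℕ) := Input ι α → Option Bool

/-- A total function has every input in its domain. -/
def TotalFn {ι : Type} {α : ι → ℕ} (f : PartialFn ι α) : Prop := ∀ x, f x ≠ none

/-- Classical truth value of a proposition, as a `Bool`. -/
noncomputable def ofProp (P : Prop) : Bool := @decide P (Classical.propDecidable P)

/-! ### Decision trees and classical query complexity -/

/-- Decision trees over index set `ι` with alphabets `α` and leaf labels `L`. -/
inductive DTree (ι : Type) (α : ι → ℕ) (L : Type) : Type
  | leaf : L → DTree ι α L
  | node : (i : ι) → (Fin (α i) → DTree ι α L) → DTree ι α L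

namespace DTree

variable {ι : Type} {α : ι → ℕ} {L : Type}

/-- Evaluate a decision tree on an input. -/
def eval : DTree ι α L → Input ι α → L
  | leaf b, _ => b
  | node i child, x => eval (child (x i)) x

/-- The number of queries the tree makes on a given input. -/
def cost : DTree ι α L → Input ι α → ℕ
  | leaf _, _ => 0
  | node i child, x => cost (child (x i)) x + 1

/-- The depth (worst-case number of queries) of a decision tree. -/
def depth : DTree ι α L → ℕ
  | leaf _ => 0
  | node _ child => (Finset.univ.sup fun a => depth (child a)) + 1

end DTree

variable {ι : Type} {α : ι → ℕ}

/-- Deterministic query complexity `D(f)`. -/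
noncomputable def Dq (f : PartialFn ι α) : ℕ :=
  sInf {d | ∃ T : DTree ι α (Option Bool), T.depth ≤ d ∧
    ∀ x b, f x = some b → T.eval x = some b}

/-- Bounded-error randomized query complexity `R(f)` (worst-case queries,
success probability at least 2/3 on every domain input). -/
noncomputable def Rq (f : PartialFn ι α) : ℕ :=
  sInf {d | ∃ μ : PMF (DTree ι α (Option Bool)),
    (∀ T ∈ μ.support, T.depth ≤ d) ∧
    ∀ x b, f x = some b → 2/3 ≤ μ.toOuterMeasure {T | T.eval x = some b}}

/-- Zero-error randomized query complexity `R₀(f)` (worst-case queries): the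
algorithm never errs, and outputs `none` ("don't know") with probability at most 1/2. -/
noncomputable def R0q (f : PartialFn ι α) : ℕ :=
  sInf {d | ∃ μ : PMF (DTree ι α (Option Bool)),
    (∀ T ∈ μ.support, T.depth ≤ d) ∧
    (∀ T ∈ μ.support, ∀ x b, f x = some b → T.eval x = some b ∨ T.eval x = none) ∧
    ∀ x b, f x = some b → μ.toOuterMeasure {T | T.eval x = none} ≤ 1/2}

/-- Zero-error randomized query complexity, measured by the worst-case *expected*
number of queries over domain inputs (value in `ℝ≥0∞`). -/
noncomputable def R0expq (f : PartialFn ι α) : ℝ≥0∞ :=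
  sInf {c | ∃ μ : PMF (DTree ι α (Option Bool)),
    (∀ T ∈ μ.support, ∀ x b, f x = some b → T.eval x = some b ∨ T.eval x = none) ∧
    (∀ x b, f x = some b → μ.toOuterMeasure {T | T.eval x = none} ≤ 1/2) ∧
    (∀ x b, f x = some b → ∑' T, μ T * (T.cost x : ℝ≥0∞) ≤ c)}

/-- One-sided-error randomized query complexity `R₁(f)`: accept every 1-input with
probability at least 2/3, and never accept a 0-input. -/
noncomputable def R1q (f : PartialFn ι α) : ℕ :=
  sInf {d | ∃ μ : PMF (DTree ι α (Option Bool)),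
    (∀ T ∈ μ.support, T.depth ≤ d) ∧
    (∀ x, f x = some true → 2/3 ≤ μ.toOuterMeasure {T | T.eval x = some true}) ∧
    (∀ x, f x = some false → ∀ T ∈ μ.support, T.eval x ≠ some true)}

/-! ### Quantum query complexity -/

/-- The index set of the state space of a quantum query algorithm:
a query register `Σ i, Fin (α i)` together with a workspace register `Fin W`. -/
abbrev QIdx (ι : Type) (α : ι → ℕ) (W : ℕ) := (Σ i : ι, Fin (α i)) × Fin W

variable [Fintype ι] [DecidableEq ι]

/-- The standard query oracle for input `x`: the permutation matrix sending the basis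
vector `|i,a⟩|w⟩` to `|i, a + x i⟩|w⟩` (addition modulo `α i`). -/
noncomputable def oracleMatrix (W : ℕ) (x : Input ι α) :
    Matrix (QIdx ι α W) (QIdx ι α W) ℂ :=
  Matrix.of fun j j' =>
    if j.2 = j'.2 ∧ j.1 = ⟨j'.1.1, j'.1.2 + x j'.1.1⟩ then 1 else 0

/-- The product `U_T · O · U_{T-1} · O ⋯ O · U_0` of unitaries interleaved with oracle
calls, defining a `T`-query quantum algorithm. -/
noncomputable def qProd {τ : Type} [Fintype τ] (U : ℕ → Matrix τ τ ℂ) (Ox : Matrix τ τ ℂ) :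
    ℕ → Matrix τ τ ℂ
  | 0 => U 0
  | t + 1 => U (t + 1) * Ox * qProd U Ox t

/-- A quantum query algorithm: a number `T` of queries, a workspace size `W`,
unitaries `U 0, …, U T`, a unit initial state, and a measurement assigning to each
basis state an output in `Option Bool` (`none` = "don't know"). -/
structure QAlg (ι : Type) [Fintype ι] [DecidableEq ι] (α : ι → ℕ) where
  T : ℕ
  W : ℕ
  U : ℕ → Matrix (QIdx ι α W) (QIdx ι α W) ℂ
  unitary : ∀ t, U t ∈ Matrix.unitaryGroup (QIdx ι α W) ℂ
  init : QIdx ι α W → ℂ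
  init_norm : ∑ j, ‖init j‖ ^ 2 = 1
  out : QIdx ι α W → Option Bool

/-- The final state of a quantum algorithm on input `x`. -/
noncomputable def QAlg.finalState (A : QAlg ι α) (x : Input ι α) : QIdx ι α A.W → ℂ :=
  (qProd A.U (oracleMatrix A.W x) A.T).mulVec A.init

/-- The probability that the algorithm outputs `v` on input `x`. -/
noncomputable def QAlg.outProb (A : QAlg ι α) (x : Input ι α) (v : Option Bool) : ℝ :=
  ∑ j, if A.out j = v then ‖A.finalState x j‖ ^ 2 else 0

/-- Bounded-error quantum query complexity `Q(f)`. -/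
noncomputable def Qq (f : PartialFn ι α) : ℕ :=
  sInf {d | ∃ A : QAlg ι α, A.T ≤ d ∧
    ∀ x b, f x = some b → (2 : ℝ)/3 ≤ A.outProb x (some b)}

/-- Exact quantum query complexity `Q_E(f)`. -/
noncomputable def QEq (f : PartialFn ι α) : ℕ :=
  sInf {d | ∃ A : QAlg ι α, A.T ≤ d ∧
    ∀ x b, f x = some b → A.outProb x (some b) = 1}

/-- One-sided-error quantum query complexity `Q₁(f)`. -/
noncomputable def Q1q (f : PartialFn ι α) : ℕ :=
  sInf {d | ∃ A : QAlg ι α, A.T ≤ d ∧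
    (∀ x, f x = some true → (2 : ℝ)/3 ≤ A.outProb x (some true)) ∧
    (∀ x, f x = some false → A.outProb x (some true) = 0)}

/-- Zero-error quantum query complexity `Q₀(f)`: never wrong, outputs `none`
with probability at most 1/2. -/
noncomputable def Q0q (f : PartialFn ι α) : ℕ :=
  sInf {d | ∃ A : QAlg ι α, A.T ≤ d ∧
    ∀ x b, f x = some b → A.outProb x (some !b) = 0 ∧ A.outProb x none ≤ 1/2}

/-! ### Certificate complexity -/

/-- A partial assignment `ρ` is consistent with an input `x`. -/
def Consistent (ρ : ∀ i : ι, Option (Fin (α i))) (x : Input ι α) : Prop :=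
  ∀ i v, ρ i = some v → x i = v

/-- The number of fixed positions of a partial assignment. -/
noncomputable def certSize (ρ : ∀ i : ι, Option (Fin (α i))) : ℕ :=
  Nat.card {i // (ρ i).isSome}

/-- The certificate complexity of `f` at input `x`: the least size of a partial
assignment consistent with `x` forcing the value `f x` on all domain inputs. -/
noncomputable def CxAt (f : PartialFn ι α) (x : Input ι α) : ℕ :=
  sInf {s | ∃ ρ, Consistent ρ x ∧ (∀ y, Consistent ρ y → f y = none ∨ f y = f x) ∧
    certSize ρ ≤ s}

/-- Certificate complexity `C(f)`. -/
noncomputable def Cq (f : PartialFn ι α) : ℕ :=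
  sSup {s | ∃ x, f x ≠ none ∧ s = CxAt f x}

/-- One-certificate complexity `C¹(f)`. -/
noncomputable def C1q (f : PartialFn ι α) : ℕ :=
  sSup {s | ∃ x, f x = some true ∧ s = CxAt f x}

/-! ### Polynomial degree -/

/-- Exact polynomial degree `deg(f)`: least degree of a real polynomial agreeing
with `f` (as a 0/1 function of the numerical values of the input symbols) on its domain. -/
noncomputable def degq (f : PartialFn ι α) : ℕ :=
  sInf {d | ∃ p : MvPolynomial ι ℝ, p.totalDegree ≤ d ∧
    ∀ x b, f x = some b →
      MvPolynomial.eval (fun i => ((x i : ℕ) : ℝ)) p = if b then 1 else 0}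

/-- Approximate polynomial degree `adeg(f)`: least degree of a real polynomial
approximating `f` pointwise to error 1/3 on its domain. -/
noncomputable def adegq (f : PartialFn ι α) : ℕ :=
  sInf {d | ∃ p : MvPolynomial ι ℝ, p.totalDegree ≤ d ∧
    ∀ x b, f x = some b →
      |MvPolynomial.eval (fun i => ((x i : ℕ) : ℝ)) p - if b then 1 else 0| ≤ 1/3}

end QC
/-! ### Certifying functions and cheat sheets -/

namespace QC

variable {ι : Type} {α : ι → ℕ}

/-- `φ` is a certifying function for the partial function `f`: it accepts `(x, y)`
only when `x` is in the domain of `f` and the first bit of `y` equals `f x`; every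
domain input has some accepted certificate `y`; and the all-zeros `y` is never accepted. -/
def IsCertifying {k : ℕ} (hk : 0 < k) (f : PartialFn ι α)
    (φ : Input ι α → (Fin k → Fin 2) → Bool) : Prop :=
  (∀ x y, f x = none → φ x y = false) ∧
  (∀ x y b, f x = some b → y ⟨0, hk⟩ ≠ (if b then 1 else 0) → φ x y = false) ∧
  (∀ x b, f x = some b → ∃ y, φ x y = true) ∧
  (∀ x, φ x (fun _ => 0) = false)

/-- The index set of the input to a certifying function, viewed as a query function:
the original input together with `k` certificate bits. -/
abbrev CertIdx (ι : Type) (k : ℕ) := ι ⊕ Fin k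

/-- Alphabets for `CertIdx`. -/
def certAlphabet (α : ι → ℕ) (k : ℕ) : CertIdx ι k → ℕ := Sum.elim α fun _ => 2

/-- A certifying function viewed as a total query function on input ⊕ certificate bits. -/
def certFn {k : ℕ} (φ : Input ι α → (Fin k → Fin 2) → Bool) :
    PartialFn (CertIdx ι k) (certAlphabet α k) :=
  fun z => some (φ (fun i => z (Sum.inl i)) (fun q => z (Sum.inr q)))

/-- The index set of the input to the cheat sheet version of a function: `c` copies of
the original input, followed by `2^c` cells each holding `c` certificate strings of `k` bits. -/
abbrev CSIdx (ι : Type) (c k : ℕ) := (Fin c × ι) ⊕ (Fin (2 ^ c) × Fin c × Fin k)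

/-- Alphabets for `CSIdx`. -/
def csAlphabet (α : ι → ℕ) (c k : ℕ) : CSIdx ι c k → ℕ :=
  Sum.elim (fun p => α p.2) fun _ => 2

/-- The `i`-th copy of the original input inside a cheat sheet input. -/
def csX {c k : ℕ} (z : Input (CSIdx ι c k) (csAlphabet α c k)) (i : Fin c) : Input ι α :=
  fun p => z (Sum.inl (i, p))

/-- The `i`-th certificate string in the `ℓ`-th cheat sheet cell. -/
def csY {c k : ℕ} (z : Input (CSIdx ι c k) (csAlphabet α c k)) (ℓ : Fin (2 ^ c))
    (i : Fin c) : Fin k → Fin 2 :=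
  fun q => z (Sum.inr (ℓ, i, q))

/-- The number in `[2^c]` whose binary representation is the bit string `b`. -/
def binToFin (c : ℕ) (b : Fin c → Bool) : Fin (2 ^ c) :=
  ⟨(∑ i, if b i then 2 ^ (i : ℕ) else 0) % 2 ^ c, Nat.mod_lt _ (by positivity)⟩

/-- The defining condition of the cheat sheet function: all `c` copies lie in the
domain of `f`, and the cell addressed by their `f`-values holds certificates
accepted by `φ` for each copy. -/
def CSCond {c k : ℕ} (f : PartialFn ι α) (φ : Input ι α → (Fin k → Fin 2) → Bool)
    (z : Input (CSIdx ι c k) (csAlphabet α c k)) : Prop :=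
  ∃ bvec : Fin c → Bool, (∀ i, f (csX z i) = some (bvec i)) ∧
    ∀ i, φ (csX z i) (csY z (binToFin c bvec) i) = true

/-- The cheat sheet version of `f` with respect to the certifying function `φ`,
with `c` copies of `f`. It is a total function. -/
noncomputable def cheatSheet (c : ℕ) {k : ℕ} (f : PartialFn ι α)
    (φ : Input ι α → (Fin k → Fin 2) → Bool) :
    PartialFn (CSIdx ι c k) (csAlphabet α c k) :=
  fun z => some (ofProp (CSCond f φ z))

/-! ### OR / AND compositions -/

/-- The `OR` function on `m` bits (alphabet `Fin 2`). -/
def orFn (m : ℕ) (z : Fin m → Fin 2) : Fin 2 := if ∃ j, z j = 1 then 1 else 0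

/-- The `AND` function on `m` bits (alphabet `Fin 2`). -/
def andFn (m : ℕ) (z : Fin m → Fin 2) : Fin 2 := if ∀ j, z j = 1 then 1 else 0

/-- The composition `f ∘ OR_m`. -/
def composeOr {n : ℕ} (f : PartialFn (Fin n) fun _ => 2) (m : ℕ) :
    PartialFn (Fin n × Fin m) (fun _ => 2) :=
  fun z => f fun i => orFn m fun j => z (i, j)

/-- The composition `f ∘ AND_m ∘ OR_m`. -/
def composeAndOr {n : ℕ} (f : PartialFn (Fin n) fun _ => 2) (m : ℕ) :
    PartialFn (Fin n × Fin m × Fin m) (fun _ => 2) :=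
  fun z => f fun i => andFn m fun j => orFn m fun l => z (i, j, l)

/-! ### k-SUM, Block k-sum, BKK and its recursive composition -/

/-- The `k`-SUM function on `n` numbers from `[q]`: is there a set of `k` of the
input numbers summing to `0` modulo `q`? -/
noncomputable def kSUMfn (n q k : ℕ) : PartialFn (Fin n) (fun _ => q) :=
  fun x => some (ofProp (∃ S : Finset (Fin n), S.card = k ∧
    (∑ i ∈ S, (x i : ℕ)) % q = 0))

/-- Number of ones in a block of bits. -/
def onesCount {B : ℕ} (z : Fin B → Fin 2) : ℕ := (Finset.univ.filter fun j => z j = 1).card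

/-- The number encoded in binary by a block of bits. -/
def blockVal {B : ℕ} (z : Fin B → Fin 2) : ℕ := ∑ j, if z j = 1 then 2 ^ (j : ℕ) else 0

/-- A block is balanced if it has an equal number of 0s and 1s. -/
def isBalanced {B : ℕ} (z : Fin B → Fin 2) : Prop := 2 * onesCount z = B

/-- Block `k`-sum on `nb` blocks of `B` bits each: value 1 iff there are `k` balanced
blocks whose encoded numbers sum to 0 (mod `2^B`) and every other block has at least
as many 1s as 0s. -/
noncomputable def blockKSumBool (nb B k : ℕ) (z : Fin nb × Fin B → Fin 2) : Bool :=
  ofProp (∃ S : Finset (Fin nb), S.card = k ∧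
    (∀ i ∈ S, isBalanced fun j => z (i, j)) ∧
    (∑ i ∈ S, blockVal fun j => z (i, j)) % 2 ^ B = 0 ∧
    ∀ i ∉ S, B ≤ 2 * onesCount fun j => z (i, j))

/-- The Boolean version of `k`-SUM on `m` numbers of `w` bits each (mod `2^w`). -/
noncomputable def kSumBool (m w k : ℕ) (z : Fin m × Fin w → Fin 2) : Bool :=
  ofProp (∃ S : Finset (Fin m), S.card = k ∧
    (∑ i ∈ S, blockVal fun j => z (i, j)) % 2 ^ w = 0)

/-- Block size of the outer Block `k`-sum in `BKK` on (roughly) `n` outer bits. -/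
def bkkB (n k : ℕ) : ℕ := 10 * k * Nat.log 2 n
/-- Number of blocks of the outer Block `k`-sum in `BKK`. -/
def bkkNB (n k : ℕ) : ℕ := n / bkkB n k
/-- Bits per number of the inner Boolean `k`-SUM in `BKK`. -/
def bkkW (n k : ℕ) : ℕ := k * Nat.log 2 n
/-- Number of numbers of the inner Boolean `k`-SUM in `BKK`. -/
def bkkM (n k : ℕ) : ℕ := n / bkkW n k

/-- The index set of the inputs of `BKK_{n²,k}` (one inner `k`-SUM input bit for
each outer Block `k`-sum input bit; roughly `n²` bits in total). -/
abbrev BKKIdx (n k : ℕ) := (Fin (bkkNB n k) × Fin (bkkB n k)) × (Fin (bkkM n k) × Fin (bkkW n k))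

/-- `BKK_{n²,k}`: Block `k`-sum composed with the Boolean version of `k`-SUM. -/
noncomputable def bkkBool (n k : ℕ) (z : BKKIdx n k → Fin 2) : Bool :=
  blockKSumBool (bkkNB n k) (bkkB n k) k fun ob =>
    if kSumBool (bkkM n k) (bkkW n k) k (fun p => z (ob, p)) then 1 else 0

/-- `BKK_{n²,k}` as a total query function. -/
noncomputable def BKKfn (n k : ℕ) : PartialFn (BKKIdx n k) (fun _ => 2) :=
  fun z => some (bkkBool n k z)

/-- The `d`-fold self-composition of a total Boolean function `g`: a depth-`d` tree
each of whose internal nodes is a copy of `g`; input bits are indexed by root-to-leaf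
paths `Fin d → I`. -/
noncomputable def iterFn {I : Type} (g : (I → Fin 2) → Bool) :
    (d : ℕ) → ((Fin d → I) → Fin 2) → Bool
  | 0, z => decide (z (fun i => i.elim0) = 1)
  | d + 1, z => g fun a => if iterFn g d (fun v => z (Fin.cons a v)) then 1 else 0

/-- The recursion depth used for `RecBKK`: `d = (4/25)·log n / log log n`. -/
def recD (n : ℕ) : ℕ := 4 * Nat.log 2 n / (25 * Nat.log 2 (Nat.log 2 n))

/-- The index set of the inputs of `RecBKK`. -/
abbrev RecIdx (n : ℕ) := Fin (recD n) → BKKIdx n (Nat.log 2 n)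

/-- `RecBKK`: the `recD n`-fold self-composition of `BKK` with `k = log n`. -/
noncomputable def RecBKKfn (n : ℕ) : PartialFn (RecIdx n) (fun _ => 2) :=
  fun z => some (iterFn (bkkBool n (Nat.log 2 n)) (recD n) z)

/-- The nominal input size `N = n^{2d}` of `RecBKK`. -/
def recN (n : ℕ) : ℕ := n ^ (2 * recD n)

end QC

/-! ### Euclidean norms of state vectors -/

namespace QC

/-- The Euclidean norm of a complex state vector. -/
noncomputable def l2norm {τ : Type} [Fintype τ] (v : τ → ℂ) : ℝ :=
  ‖(WithLp.toLp 2 v : EuclideanSpace ℂ τ)‖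

section L2Norm

variable {τ : Type} [Fintype τ]

lemma l2norm_sq (v : τ → ℂ) : l2norm v ^ 2 = ∑ j, ‖v j‖ ^ 2 := by
  simp [l2norm, EuclideanSpace.norm_sq_eq]

lemma l2norm_nonneg (v : τ → ℂ) : 0 ≤ l2norm v := norm_nonneg _

lemma l2norm_add_le (u v : τ → ℂ) : l2norm (u + v) ≤ l2norm u + l2norm v := by
  simpa [l2norm] using norm_add_le (WithLp.toLp 2 u : EuclideanSpace ℂ τ) (WithLp.toLp 2 v)

lemma l2norm_sub_le (u v : τ → ℂ) : l2norm (u - v) ≤ l2norm u + l2norm v := by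
  simpa [l2norm] using norm_sub_le (WithLp.toLp 2 u : EuclideanSpace ℂ τ) (WithLp.toLp 2 v)

lemma l2norm_le_add_sub (u v : τ → ℂ) : l2norm u ≤ l2norm v + l2norm (u - v) := by
  have := l2norm_add_le v (u - v)
  simpa using this

lemma l2norm_sum_le {σ : Type} (s : Finset σ) (v : σ → τ → ℂ) :
    l2norm (∑ i ∈ s, v i) ≤ ∑ i ∈ s, l2norm (v i) := by
  have := norm_sum_le s (fun i => (WithLp.toLp 2 (v i) : EuclideanSpace ℂ τ))
  simpa [l2norm, WithLp.toLp_sum] using this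

lemma l2norm_smul (a : ℂ) (v : τ → ℂ) : l2norm (a • v) = ‖a‖ * l2norm v := by
  simpa [l2norm] using norm_smul a (WithLp.toLp 2 v : EuclideanSpace ℂ τ)

lemma l2norm_le_of_sq_le {v : τ → ℂ} {r : ℝ} (hr : 0 ≤ r) (h : ∑ j, ‖v j‖ ^ 2 ≤ r ^ 2) :
    l2norm v ≤ r := by
  rw [← l2norm_sq] at h
  exact (pow_le_pow_iff_left₀ (l2norm_nonneg _) hr two_ne_zero).1 h

lemma star_dotProduct_mulVec_unitary [DecidableEq τ] {U : Matrix τ τ ℂ}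
    (hU : U ∈ Matrix.unitaryGroup τ ℂ) (u v : τ → ℂ) :
    star (U.mulVec u) ⬝ᵥ U.mulVec v = star u ⬝ᵥ v := by
  rw [Matrix.star_mulVec, Matrix.dotProduct_mulVec, Matrix.vecMul_vecMul,
    ← Matrix.star_eq_conjTranspose, Matrix.mem_unitaryGroup_iff'.1 hU, Matrix.vecMul_one]

lemma star_dotProduct_self (v : τ → ℂ) : star v ⬝ᵥ v = ((l2norm v ^ 2 : ℝ) : ℂ) := by
  rw [l2norm_sq]
  simp only [dotProduct, Pi.star_apply, RCLike.star_def, Complex.conj_mul']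
  push_cast
  rfl

lemma l2norm_mulVec [DecidableEq τ] {U : Matrix τ τ ℂ}
    (hU : U ∈ Matrix.unitaryGroup τ ℂ) (v : τ → ℂ) : l2norm (U.mulVec v) = l2norm v := by
  have h := star_dotProduct_mulVec_unitary hU v v
  rw [star_dotProduct_self, star_dotProduct_self] at h
  have h' : l2norm (U.mulVec v) ^ 2 = l2norm v ^ 2 := by exact_mod_cast h
  exact (sq_eq_sq₀ (l2norm_nonneg _) (l2norm_nonneg _)).1 h'

end L2Norm

/-! ### The query oracle as a permutation -/

section Oracle

variable {ι : Type} {α : ι → ℕ} {ω : Type}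

/-- The permutation of basis states `|i,a⟩|w⟩ ↦ |i,a + x i⟩|w⟩` performed by a query. -/
def queryPerm (ω : Type) (x : Input ι α) : Equiv.Perm ((Σ i : ι, Fin (α i)) × ω) where
  toFun j := (⟨j.1.1, j.1.2 + x j.1.1⟩, j.2)
  invFun j := (⟨j.1.1, j.1.2 - x j.1.1⟩, j.2)
  left_inv := by
    rintro ⟨⟨i, a⟩, w⟩
    have : NeZero (α i) := ⟨fun h => (h ▸ a).elim0⟩
    simp
  right_inv := by
    rintro ⟨⟨i, a⟩, w⟩
    have : NeZero (α i) := ⟨fun h => (h ▸ a).elim0⟩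
    simp

/-- The permutation matrix sending the basis vector `j` to `σ j`. -/
def permMat {τ : Type} [DecidableEq τ] (σ : Equiv.Perm τ) : Matrix τ τ ℂ :=
  Matrix.of fun j j' => if j = σ j' then 1 else 0

lemma permMat_mulVec {τ : Type} [DecidableEq τ] [Fintype τ] (σ : Equiv.Perm τ) (v : τ → ℂ) :
    (permMat σ).mulVec v = fun j => v (σ.symm j) := by
  funext j
  simp [permMat, Matrix.mulVec, dotProduct, ← Equiv.symm_apply_eq]

lemma permMat_mul {τ : Type} [DecidableEq τ] [Fintype τ] (σ ρ : Equiv.Perm τ) :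
    permMat σ * permMat ρ = permMat (ρ.trans σ) := by
  apply Matrix.mulVec_injective
  funext v
  rw [← Matrix.mulVec_mulVec]
  simp [permMat_mulVec]

lemma permMat_refl {τ : Type} [DecidableEq τ] : permMat (Equiv.refl τ) = 1 := by
  ext i j
  rfl

lemma star_permMat {τ : Type} [DecidableEq τ] (σ : Equiv.Perm τ) :
    star (permMat σ) = permMat σ.symm := by
  ext i j
  simp only [permMat, Matrix.star_apply, Matrix.of_apply, Equiv.eq_symm_apply]
  split_ifs <;> simp_all

lemma permMat_mem_unitaryGroup {τ : Type} [DecidableEq τ] [Fintype τ] (σ : Equiv.Perm τ) :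
    permMat σ ∈ Matrix.unitaryGroup τ ℂ := by
  rw [Matrix.mem_unitaryGroup_iff, star_permMat, permMat_mul, Equiv.symm_trans_self, permMat_refl]

variable [DecidableEq ι]

lemma oracleMatrix_eq_permMat (W : ℕ) (x : Input ι α) :
    oracleMatrix W x = permMat (queryPerm (Fin W) x) := by
  ext ⟨⟨i, a⟩, w⟩ ⟨⟨i', a'⟩, w'⟩
  simp only [oracleMatrix, permMat, queryPerm, Matrix.of_apply, Equiv.coe_fn_mk, Prod.mk.injEq]
  congr 1
  rw [and_comm]

variable [Fintype ι]

lemma oracleMatrix_mem_unitaryGroup (W : ℕ) (x : Input ι α) :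
    oracleMatrix W x ∈ Matrix.unitaryGroup (QIdx ι α W) ℂ := by
  rw [oracleMatrix_eq_permMat]
  exact permMat_mem_unitaryGroup _

lemma qProd_mem_unitaryGroup {τ : Type} [Fintype τ] [DecidableEq τ] {U : ℕ → Matrix τ τ ℂ}
    (hU : ∀ t, U t ∈ Matrix.unitaryGroup τ ℂ) {O : Matrix τ τ ℂ}
    (hO : O ∈ Matrix.unitaryGroup τ ℂ) (t : ℕ) : qProd U O t ∈ Matrix.unitaryGroup τ ℂ := by
  induction t with
  | zero => exact hU 0
  | succ t ih => exact mul_mem (mul_mem (hU _) hO) ih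

/-- A bounded-error algorithm over any index type identified with the basis states of a query
algorithm gives a query algorithm. -/
lemma exists_qAlg_of_algorithm {f : PartialFn ι α} {J : Type} [Fintype J] [DecidableEq J] {W : ℕ}
    (e : QIdx ι α W ≃ J) (T : ℕ) (U : ℕ → Matrix J J ℂ)
    (hU : ∀ t, U t ∈ Matrix.unitaryGroup J ℂ) (O : Input ι α → Matrix J J ℂ)
    (hO : ∀ x, O x = permMat ((e.symm.trans (queryPerm (Fin W) x)).trans e))
    (init : J → ℂ) (hinit : ∑ j, ‖init j‖ ^ 2 = 1) (out : J → Bool)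
    (hout : ∀ x b, f x = some b →
      (2 : ℝ) / 3 ≤ ∑ j, if out j = b then ‖(qProd U (O x) T).mulVec init j‖ ^ 2 else 0) :
    ∃ A : QAlg ι α, A.T ≤ T ∧
      ∀ x b, f x = some b → (2 : ℝ) / 3 ≤ A.outProb x (some b) := by
  have hq : ∀ x t, qProd (fun t => (U t).submatrix e e) (oracleMatrix W x) t =
      (qProd U (O x) t).submatrix e e := by
    intro x t
    have hx : oracleMatrix W x = (O x).submatrix e e := by
      rw [hO, oracleMatrix_eq_permMat]
      ext i j
      simp [permMat]
    induction t with
    | zero => rfl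
    | succ t ih => simp only [qProd]; rw [ih, hx, Matrix.submatrix_mul_equiv,
        Matrix.submatrix_mul_equiv]
  refine ⟨⟨T, W, fun t => (U t).submatrix e e, ?_, init ∘ e, ?_,
    fun j => some (out (e j))⟩, le_rfl, ?_⟩
  · intro t
    rw [Matrix.mem_unitaryGroup_iff, Matrix.star_eq_conjTranspose, Matrix.conjTranspose_submatrix,
      Matrix.submatrix_mul_equiv, ← Matrix.star_eq_conjTranspose,
      Matrix.mem_unitaryGroup_iff.1 (hU t), Matrix.submatrix_one_equiv]
  · simpa using (e.sum_comp (fun j => ‖init j‖ ^ 2)).trans hinit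
  · intro x b hb
    refine (hout x b hb).trans (le_of_eq ?_)
    simp only [QAlg.outProb, QAlg.finalState, hq]
    rw [← e.sum_comp]
    refine Finset.sum_congr rfl fun j _ => ?_
    have : ((qProd U (O x) T).submatrix e e).mulVec (init ∘ e) j
        = (qProd U (O x) T).mulVec init (e j) := by
      rw [Matrix.submatrix_mulVec_equiv]
      simp [Function.comp_assoc]
    simp only [Option.some.injEq, this]

end Oracle

end QC

/-! ### Dual adversary solutions and the algorithms they give -/

namespace QC

/-- A dual adversary solution of cost `A` for the function taking the value `g p` at the input
`val p`. -/
def DualFeasible {X : Type} {n M : ℕ} (val : X → Fin n → Fin M) (g : X → Bool) (A : ℝ) : Prop :=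
  ∃ (κ : Type) (_ : Fintype κ) (w : X → Fin n → κ → ℝ),
    (∀ x, ∑ i, ∑ k, w x i k ^ 2 ≤ A) ∧
    ∀ x y, g x = false → g y = true →
      ∑ i, (if val x i = val y i then 0 else ∑ k, w x i k * w y i k) = 1

section Reflections

variable {H : Type} [Fintype H] [DecidableEq H]

/-- The orthogonal projection onto the span of a set of vectors, as a matrix. -/
lemma exists_projection (S : Set (H → ℂ)) :
    ∃ P : Matrix H H ℂ, star P = P ∧ P * P = P ∧ (∀ v ∈ S, P.mulVec v = v) ∧
      ∀ u, (∀ v ∈ S, star v ⬝ᵥ u = 0) → P.mulVec u = 0 := by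
  let V : Submodule ℂ (EuclideanSpace ℂ H) := Submodule.span ℂ (WithLp.toLp 2 '' S)
  let Φ := Matrix.toEuclideanCLM (𝕜 := ℂ) (n := H)
  obtain ⟨P, hP⟩ : ∃ P, Φ P = V.starProjection := Φ.surjective _
  have hsp : IsStarProjection V.starProjection := isStarProjection_starProjection
  have happ : ∀ v : H → ℂ, WithLp.toLp 2 (P.mulVec v) = V.starProjection (WithLp.toLp 2 v) := by
    intro v
    rw [← hP, Matrix.toEuclideanCLM_toLp]
  refine ⟨P, ?_, ?_, ?_, ?_⟩
  · apply EquivLike.injective Φ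
    rw [map_star, hP, hsp.isSelfAdjoint.star_eq]
  · apply EquivLike.injective Φ
    rw [map_mul, hP, hsp.isIdempotentElem.eq]
  · intro v hv
    apply WithLp.toLp_injective 2
    rw [happ, Submodule.starProjection_eq_self_iff]
    exact Submodule.subset_span ⟨v, hv, rfl⟩
  · intro u hu
    apply WithLp.toLp_injective 2
    rw [happ, WithLp.toLp_zero, Submodule.starProjection_apply_eq_zero_iff,
      Submodule.mem_orthogonal]
    intro a ha
    induction ha using Submodule.span_induction with
    | mem a h =>
      obtain ⟨v, hv, rfl⟩ := h
      rw [EuclideanSpace.inner_toLp_toLp, dotProduct_comm]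
      exact hu v hv
    | zero => simp
    | add a b _ _ ha hb => rw [inner_add_left, ha, hb, add_zero]
    | smul c a _ ha => rw [inner_smul_left, ha, mul_zero]

lemma reflection_mem_unitaryGroup {P : Matrix H H ℂ} (h1 : star P = P) (h2 : P * P = P) :
    1 - (2 : ℂ) • P ∈ Matrix.unitaryGroup H ℂ := by
  have h3 : star (1 - (2 : ℂ) • P) = 1 - (2 : ℂ) • P := by
    rw [star_sub, star_smul, h1, star_one]
    simp
  rw [Matrix.mem_unitaryGroup_iff, h3]
  simp only [sub_mul, mul_sub, one_mul, mul_one, Matrix.smul_mul, Matrix.mul_smul, h2]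
  module

/-- A unitary whose row `0` is the uniform vector. -/
lemma exists_unitary_uniform_row (K : ℕ) [NeZero K] :
    ∃ F : Matrix (Fin K) (Fin K) ℂ, F ∈ Matrix.unitaryGroup (Fin K) ℂ ∧
      ∀ τ, F 0 τ = (((√K)⁻¹ : ℝ) : ℂ) := by
  let u : Fin K → ℂ := fun _ => (((√K)⁻¹ : ℝ) : ℂ)
  let e : Fin K → ℂ := Pi.single 0 1
  have hK : (0 : ℝ) < K := by exact_mod_cast Nat.pos_of_ne_zero (NeZero.ne K)
  obtain ⟨P, h1, h2, h3, h4⟩ := exists_projection ({e + u} : Set (Fin K → ℂ))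
  have huu : star u ⬝ᵥ u = 1 := by
    simp only [dotProduct, u, Pi.star_apply, RCLike.star_def, Complex.conj_ofReal]
    rw [Finset.sum_const, Finset.card_univ, Fintype.card_fin, nsmul_eq_mul]
    norm_cast
    rw [← mul_inv, Real.mul_self_sqrt hK.le, mul_inv_cancel₀ hK.ne']
  have hee : star e ⬝ᵥ e = 1 := by simp [e]
  have hue : star u ⬝ᵥ e = (((√K)⁻¹ : ℝ) : ℂ) := by simp [e, u]
  have heu : star e ⬝ᵥ u = (((√K)⁻¹ : ℝ) : ℂ) := by simp [e, u, dotProduct, Pi.single_apply]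
  have hs : P.mulVec (e + u) = e + u := h3 _ rfl
  have hd : P.mulVec (e - u) = 0 := by
    apply h4
    rintro v rfl
    rw [star_add, add_dotProduct, dotProduct_sub, dotProduct_sub, huu, hee, hue, heu]
    ring
  have he : ((2 : ℂ) • P).mulVec e = e + u := by
    have : (2 : ℂ) • e = (e + u) + (e - u) := by module
    rw [Matrix.smul_mulVec, ← Matrix.mulVec_smul, this, Matrix.mulVec_add, hs, hd, add_zero]
  refine ⟨(2 : ℂ) • P - 1, ?_, fun τ => ?_⟩
  · have h := reflection_mem_unitaryGroup h1 h2
    rw [Matrix.mem_unitaryGroup_iff] at h ⊢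
    rw [← neg_sub, star_neg, neg_mul_neg, h]
  · have hstar : star ((2 : ℂ) • P - 1) = (2 : ℂ) • P - 1 := by
      rw [star_sub, star_smul, h1, star_one]
      simp
    have hcol : ((2 : ℂ) • P - 1).mulVec e = u := by
      rw [Matrix.sub_mulVec, he, Matrix.one_mulVec, add_sub_cancel_left]
    have h0 : ((2 : ℂ) • P - 1) τ 0 = u τ := by
      rw [← hcol]
      simp [e]
    rw [← hstar, Matrix.star_apply, h0]
    simp [u]

lemma pow_mem_unitaryGroup {V : Matrix H H ℂ} (hV : V ∈ Matrix.unitaryGroup H ℂ) (t : ℕ) :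
    V ^ t ∈ Matrix.unitaryGroup H ℂ := pow_mem hV t

/-- Averaging the powers of a unitary nearly annihilates vectors of the form `v - V v`. -/
lemma l2norm_sum_pow_le {V : Matrix H H ℂ} (hV : V ∈ Matrix.unitaryGroup H ℂ) {b v : H → ℂ}
    (h : v - V.mulVec v = (2 : ℂ) • b) (K : ℕ) :
    l2norm (∑ t ∈ Finset.range K, (V ^ t).mulVec b) ≤ l2norm v := by
  have hsum : (2 : ℂ) • ∑ t ∈ Finset.range K, (V ^ t).mulVec b = v - (V ^ K).mulVec v := by
    rw [Finset.smul_sum]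
    simp_rw [← Matrix.mulVec_smul, ← h, Matrix.mulVec_sub, Matrix.mulVec_mulVec, ← pow_succ]
    have := Finset.sum_range_sub' (fun t => (V ^ t).mulVec v) K
    simpa using this
  have h1 := l2norm_sub_le v ((V ^ K).mulVec v)
  rw [← hsum, l2norm_smul, l2norm_mulVec (pow_mem_unitaryGroup hV K)] at h1
  simp only [Complex.norm_ofNat] at h1
  linarith

/-- Averaging the powers of a unitary nearly preserves vectors close to a fixed vector. -/
lemma le_l2norm_sum_pow {V : Matrix H H ℂ} (hV : V ∈ Matrix.unitaryGroup H ℂ) {b u : H → ℂ}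
    (h : V.mulVec u = u) (K : ℕ) :
    K * (l2norm u - l2norm (u - b)) ≤ l2norm (∑ t ∈ Finset.range K, (V ^ t).mulVec b) := by
  have hfix : ∀ t, (V ^ t).mulVec u = u := by
    intro t
    induction t with
    | zero => simp
    | succ t ih => rw [pow_succ, ← Matrix.mulVec_mulVec, h, ih]
  have hsum : (K : ℂ) • u - ∑ t ∈ Finset.range K, (V ^ t).mulVec b =
      ∑ t ∈ Finset.range K, (V ^ t).mulVec (u - b) := by
    simp only [Matrix.mulVec_sub, hfix, Finset.sum_sub_distrib, Finset.sum_const,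
      Finset.card_range, Nat.cast_smul_eq_nsmul]
  have h1 := l2norm_le_add_sub ((K : ℂ) • u) (∑ t ∈ Finset.range K, (V ^ t).mulVec b)
  rw [hsum, l2norm_smul] at h1
  have h2 := l2norm_sum_le (Finset.range K) (fun t => (V ^ t).mulVec (u - b))
  simp only [l2norm_mulVec (pow_mem_unitaryGroup hV _), Finset.sum_const, Finset.card_range,
    nsmul_eq_mul] at h2
  simp only [Complex.norm_natCast] at h1
  linarith

end Reflections

end QC

namespace QC

section Averaging

variable {H : Type} [Fintype H] {K : ℕ}

lemma blockDiagonal_mulVec (A : Fin K → Matrix H H ℂ) (v : H × Fin K → ℂ) (h : H) (τ : Fin K) :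
    (Matrix.blockDiagonal A).mulVec v (h, τ) = (A τ).mulVec (fun h => v (h, τ)) h := by
  simp [Matrix.mulVec, dotProduct, Matrix.blockDiagonal_apply, Fintype.sum_prod_type]

variable [DecidableEq H]

lemma blockDiagonal_mem_unitaryGroup {A : Fin K → Matrix H H ℂ}
    (hA : ∀ τ, A τ ∈ Matrix.unitaryGroup H ℂ) :
    Matrix.blockDiagonal A ∈ Matrix.unitaryGroup (H × Fin K) ℂ := by
  rw [Matrix.mem_unitaryGroup_iff, Matrix.star_eq_conjTranspose, Matrix.blockDiagonal_conjTranspose,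
    ← Matrix.blockDiagonal_mul]
  simp_rw [← Matrix.star_eq_conjTranspose, fun τ => Matrix.mem_unitaryGroup_iff.1 (hA τ)]
  exact Matrix.blockDiagonal_one

/-- The interleaved unitaries applying, on counter value `τ`, the first `τ` of `K` rounds
`O * R * N * O * N * L`, and finally `F`. -/
noncomputable def roundUnitary (L N R : Matrix H H ℂ) (F : Matrix (H × Fin K) (H × Fin K) ℂ)
    (t : ℕ) : Matrix (H × Fin K) (H × Fin K) ℂ :=
  if t = 2 * K then F
  else if t % 2 = 0 then Matrix.blockDiagonal fun τ : Fin K => if t / 2 < τ then N * L else N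
  else Matrix.blockDiagonal fun τ : Fin K => if t / 2 < τ then R * N else N

lemma qProd_roundUnitary {L N R O : Matrix H H ℂ} (F : Matrix (H × Fin K) (H × Fin K) ℂ)
    (hON : O * N * O * N = 1) (s : ℕ) (hs : s ≤ K) :
    qProd (roundUnitary L N R F) (Matrix.blockDiagonal fun _ => O) (2 * s) =
      roundUnitary L N R F (2 * s) *
        Matrix.blockDiagonal fun τ : Fin K => (O * R * N * O * N * L) ^ min (τ : ℕ) s := by
  induction s with
  | zero =>
    have : Matrix.blockDiagonal (fun _ : Fin K => (1 : Matrix H H ℂ)) = 1 :=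
      Matrix.blockDiagonal_one
    simp [qProd, this]
  | succ s ih =>
    have h1 : roundUnitary L N R F (2 * s) =
        Matrix.blockDiagonal fun τ : Fin K => if s < τ then N * L else N := by
      have : 2 * s / 2 = s := by lia
      simp only [roundUnitary, this]
      rw [if_neg (by lia), if_pos (by lia)]
    have h2 : roundUnitary L N R F (2 * s + 1) =
        Matrix.blockDiagonal fun τ : Fin K => if s < τ then R * N else N := by
      have : (2 * s + 1) / 2 = s := by lia
      simp only [roundUnitary, this]
      rw [if_neg (by lia), if_neg (by lia)]
    rw [show 2 * (s + 1) = 2 * s + 1 + 1 by ring]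
    simp only [qProd]
    rw [ih (by lia), h1, h2]
    simp only [mul_assoc]
    simp only [← Matrix.blockDiagonal_mul]
    congr 2
    funext τ
    by_cases hτ : s < (τ : ℕ)
    · rw [if_pos hτ, if_pos hτ, min_eq_right hτ.le, min_eq_right hτ, pow_succ']
      simp only [mul_assoc]
    · rw [if_neg hτ, if_neg hτ, min_eq_left (by lia), min_eq_left (by lia), ← mul_assoc N,
        ← mul_assoc O (N * O), ← mul_assoc O, ← mul_assoc O]
      simp only [← mul_assoc]
      rw [hON, one_mul]

lemma roundUnitary_mem_unitaryGroup {L N R : Matrix H H ℂ}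
    {F : Matrix (H × Fin K) (H × Fin K) ℂ} (hL : L ∈ Matrix.unitaryGroup H ℂ)
    (hN : N ∈ Matrix.unitaryGroup H ℂ) (hR : R ∈ Matrix.unitaryGroup H ℂ)
    (hF : F ∈ Matrix.unitaryGroup (H × Fin K) ℂ) (t : ℕ) :
    roundUnitary L N R F t ∈ Matrix.unitaryGroup (H × Fin K) ℂ := by
  unfold roundUnitary
  split_ifs
  · exact hF
  · refine blockDiagonal_mem_unitaryGroup fun τ => ?_
    split_ifs
    exacts [mul_mem hN hL, hN]
  · refine blockDiagonal_mem_unitaryGroup fun τ => ?_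
    split_ifs
    exacts [mul_mem hR hN, hN]

open scoped Kronecker in
lemma one_kronecker_mem_unitaryGroup {F : Matrix (Fin K) (Fin K) ℂ}
    (hF : F ∈ Matrix.unitaryGroup (Fin K) ℂ) :
    (1 : Matrix H H ℂ) ⊗ₖ F ∈ Matrix.unitaryGroup (H × Fin K) ℂ := by
  rw [Matrix.mem_unitaryGroup_iff, Matrix.star_eq_conjTranspose, Matrix.conjTranspose_kronecker,
    ← Matrix.mul_kronecker_mul, ← Matrix.star_eq_conjTranspose, ← Matrix.star_eq_conjTranspose,
    Matrix.mem_unitaryGroup_iff.1 hF, star_one, mul_one, Matrix.one_kronecker_one]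

open scoped Kronecker in
/-- The amplitude on counter value `0` after averaging is the mean of the powers of one round. -/
lemma one_kronecker_mulVec_blockDiagonal_pow [NeZero K] {F : Matrix (Fin K) (Fin K) ℂ}
    (hF : ∀ τ, F 0 τ = (((√K)⁻¹ : ℝ) : ℂ)) (V : Matrix H H ℂ) (b : H → ℂ) (h : H) :
    (((1 : Matrix H H ℂ) ⊗ₖ F) *
      Matrix.blockDiagonal fun τ : Fin K => V ^ min (τ : ℕ) K).mulVec
        (fun j => (((√K)⁻¹ : ℝ) : ℂ) * b j.1) (h, 0) =
      (K : ℂ)⁻¹ * (∑ t ∈ Finset.range K, (V ^ t).mulVec b) h := by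
  have hK : (0 : ℝ) ≤ K := by positivity
  rw [← Matrix.mulVec_mulVec]
  simp only [Matrix.mulVec, dotProduct, Fintype.sum_prod_type, Matrix.kroneckerMap_apply]
  rw [Finset.sum_eq_single h (fun h' _ hh => by simp [Matrix.one_apply_ne hh.symm]) (by simp),
    Finset.sum_apply, ← Fin.sum_univ_eq_sum_range (fun t => (V ^ t).mulVec b h), Finset.mul_sum]
  refine Finset.sum_congr rfl fun τ _ => ?_
  rw [Matrix.one_apply_eq, one_mul, hF]
  have hτ : min (τ : ℕ) K = τ := min_eq_left τ.2.le
  have hc : (((√K)⁻¹ : ℝ) : ℂ) * (((√K)⁻¹ : ℝ) : ℂ) = (K : ℂ)⁻¹ := by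
    norm_cast
    rw [← mul_inv, Real.mul_self_sqrt hK]
    push_cast
    rfl
  have := blockDiagonal_mulVec (fun τ : Fin K => V ^ min (τ : ℕ) K)
    (fun j => (((√K)⁻¹ : ℝ) : ℂ) * b j.1) h τ
  simp only [Matrix.mulVec, dotProduct, Fintype.sum_prod_type, hτ] at this
  rw [this, ← hc, mul_assoc]
  congr 1
  rw [Matrix.mulVec, dotProduct, Finset.mul_sum]
  refine Finset.sum_congr rfl fun _ _ => by ring

end Averaging

end QC

namespace QC

section DualAlgorithm

variable {n M : ℕ} {κ : Type} [Fintype κ]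

/-- The vector `∑ i, |i⟩ (p ∑ₐ |a⟩ + q |x i⟩) |w i⟩`. -/
def symbolVec (p q : ℝ) (x : Fin n → Fin M) (w : Fin n → κ → ℝ) :
    (Σ _ : Fin n, Fin M) × Option κ → ℂ
  | (_, none) => 0
  | (⟨i, a⟩, some k) => (((p + if a = x i then q else 0) * w i k : ℝ) : ℂ)

/-- The unit vector `|i₀⟩ ⊗ (uniform symbol)` in the idle part of the workspace. -/
noncomputable def idleVec (κ : Type) (M : ℕ) (i₀ : Fin n) : (Σ _ : Fin n, Fin M) × Option κ → ℂ
  | (⟨i, _⟩, none) => if i = i₀ then (((√M)⁻¹ : ℝ) : ℂ) else 0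
  | (_, some _) => 0

lemma symbolVec_dotProduct (p q p' q' : ℝ) (x y : Fin n → Fin M) (w w' : Fin n → κ → ℝ) :
    star (symbolVec p q x w) ⬝ᵥ symbolVec p' q' y w' =
      ((∑ i, (M * (p * p') + p * q' + q * p' + if x i = y i then q * q' else 0) *
        ∑ k, w i k * w' i k : ℝ) : ℂ) := by
  simp only [dotProduct, Fintype.sum_prod_type, Fintype.sum_option, Fintype.sum_sigma, symbolVec,
    Pi.star_apply, RCLike.star_def, Complex.conj_ofReal, mul_zero, zero_add]
  norm_cast
  refine Finset.sum_congr rfl fun i _ => ?_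
  have h1 : ∑ a : Fin M, (p + if a = x i then q else 0) * (p' + if a = y i then q' else 0) =
      M * (p * p') + p * q' + q * p' + if x i = y i then q * q' else 0 := by
    simp [add_mul, mul_add, Finset.sum_add_distrib, ite_mul, mul_ite, Finset.sum_ite_eq', eq_comm (a := y i)]
    ring
  rw [← h1, Finset.sum_mul_sum]
  refine Finset.sum_congr rfl fun a _ => Finset.sum_congr rfl fun k _ => by ring

lemma idleVec_dotProduct_symbolVec (i₀ : Fin n) (p q : ℝ) (x : Fin n → Fin M)
    (w : Fin n → κ → ℝ) : star (idleVec κ M i₀) ⬝ᵥ symbolVec p q x w = 0 := by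
  simp [dotProduct, Fintype.sum_prod_type, Fintype.sum_option, symbolVec, idleVec]

lemma symbolVec_dotProduct_idleVec (i₀ : Fin n) (p q : ℝ) (x : Fin n → Fin M)
    (w : Fin n → κ → ℝ) : star (symbolVec p q x w) ⬝ᵥ idleVec κ M i₀ = 0 := by
  simp [dotProduct, Fintype.sum_prod_type, Fintype.sum_option, symbolVec, idleVec]

lemma idleVec_dotProduct_self [NeZero M] (i₀ : Fin n) :
    star (idleVec κ M i₀) ⬝ᵥ idleVec κ M i₀ = 1 := by
  have hM : (0 : ℝ) < M := by exact_mod_cast Nat.pos_of_ne_zero (NeZero.ne M)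
  have h2 : (M : ℝ) * ((√M)⁻¹ * (√M)⁻¹) = 1 := by
    rw [← mul_inv, Real.mul_self_sqrt hM.le, mul_inv_cancel₀ hM.ne']
  simp only [dotProduct, Fintype.sum_prod_type, Fintype.sum_option, Fintype.sum_sigma, idleVec,
    Pi.star_apply, RCLike.star_def, mul_zero, Finset.sum_const_zero, add_zero]
  rw [Finset.sum_eq_single i₀ (by simp +contextual) (by simp)]
  simp only [if_true, Complex.conj_ofReal, Finset.sum_const, Finset.card_univ, Fintype.card_fin,
    nsmul_eq_mul]
  exact_mod_cast h2

lemma l2norm_symbolVec_sq (p q : ℝ) (x : Fin n → Fin M) (w : Fin n → κ → ℝ) :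
    l2norm (symbolVec p q x w) ^ 2 =
      (M * (p * p) + p * q + q * p + q * q) * ∑ i, ∑ k, w i k ^ 2 := by
  have h := symbolVec_dotProduct p q p q x x w w
  rw [star_dotProduct_self] at h
  rw [Complex.ofReal_injective h, Finset.mul_sum]
  simp [pow_two]

variable [DecidableEq κ]

lemma permMat_queryPerm_mulVec_symbolVec [NeZero M] (p q : ℝ) (x : Fin n → Fin M)
    (w : Fin n → κ → ℝ) :
    (permMat (queryPerm (α := fun _ => M) (Option κ) x)).mulVec (symbolVec p q 0 w) =
      symbolVec p q x w := by
  rw [permMat_mulVec]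
  funext ⟨⟨i, a⟩, o⟩
  cases o <;> simp [queryPerm, symbolVec, sub_eq_zero]

lemma permMat_queryPerm_mulVec_idleVec (i₀ : Fin n) (x : Fin n → Fin M) :
    (permMat (queryPerm (α := fun _ => M) (Option κ) x)).mulVec (idleVec κ M i₀) =
      idleVec κ M i₀ := by
  rw [permMat_mulVec]
  funext ⟨⟨i, a⟩, o⟩
  cases o <;> simp [queryPerm, idleVec]

/-- The permutation `|i,a⟩|w⟩ ↦ |i,-a⟩|w⟩`. -/
def negPerm (n M : ℕ) [NeZero M] (ω : Type) : Equiv.Perm ((Σ _ : Fin n, Fin M) × ω) where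
  toFun j := (⟨j.1.1, -j.1.2⟩, j.2)
  invFun j := (⟨j.1.1, -j.1.2⟩, j.2)
  left_inv := by rintro ⟨⟨i, a⟩, w⟩; simp
  right_inv := by rintro ⟨⟨i, a⟩, w⟩; simp

lemma query_neg_query_neg [NeZero M] (x : Fin n → Fin M) :
    permMat (queryPerm (α := fun _ => M) (Option κ) x) * permMat (negPerm n M (Option κ)) *
      permMat (queryPerm (α := fun _ => M) (Option κ) x) * permMat (negPerm n M (Option κ)) =
      1 := by
  rw [permMat_mul, permMat_mul, permMat_mul, ← permMat_refl]
  congr 1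
  ext1 ⟨⟨i, a⟩, w⟩
  simp [queryPerm, negPerm]

/-- One round of the algorithm on input `x` is a product of two reflections, the second one through
the complement of `P` transported by the query. -/
lemma round_mulVec {H : Type} [Fintype H] [DecidableEq H] {O N P L : Matrix H H ℂ}
    (hON : O * N * O * N = 1) (v : H → ℂ) :
    (O * (1 - (2 : ℂ) • P) * N * O * N * L).mulVec v =
      L.mulVec v - (2 : ℂ) • O.mulVec (P.mulVec ((N * O * N).mulVec (L.mulVec v))) := by
  have : O * (1 - (2 : ℂ) • P) * N * O * N * L =
      O * N * O * N * L - (2 : ℂ) • (O * (P * (N * O * N * L))) := by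
    simp only [mul_sub, sub_mul, mul_one, Matrix.mul_smul, Matrix.smul_mul, mul_assoc]
  rw [this, hON, one_mul, Matrix.sub_mulVec, Matrix.smul_mulVec]
  simp only [Matrix.mulVec_mulVec, mul_assoc]

end DualAlgorithm

end QC

namespace QC

section DualAlgorithm

variable {n M : ℕ} [NeZero M] {X : Type} {val : X → Fin n → Fin M} {g : X → Bool}

/-- A dual solution yields a pair of reflections whose product, conjugated by queries, nearly fixes
the idle vector on positive inputs and nearly averages it away on negative ones. -/
lemma DualFeasible.exists_reflections {A : ℕ} (hA : 1 ≤ A) (h : DualFeasible val g A)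
    (i₀ : Fin n) :
    ∃ (κ : Type) (_ : Fintype κ) (_ : DecidableEq κ)
      (L R : Matrix ((Σ _ : Fin n, Fin M) × Option κ) ((Σ _ : Fin n, Fin M) × Option κ) ℂ),
      L ∈ Matrix.unitaryGroup _ ℂ ∧ R ∈ Matrix.unitaryGroup _ ℂ ∧ ∀ p : X,
        let N := permMat (negPerm n M (Option κ))
        let O := permMat (queryPerm (α := fun _ => M) (Option κ) (val p))
        let V := O * R * N * O * N * L
        (g p = false → ∃ v, l2norm v ^ 2 ≤ 801 * (A : ℝ) ^ 2 ∧
          v - V.mulVec v = (2 : ℂ) • idleVec κ M i₀) ∧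
        (g p = true → ∃ u, V.mulVec u = u ∧ 1 ≤ l2norm u ∧
          l2norm (u - idleVec κ M i₀) ≤ 1 / 10) := by
  classical
  obtain ⟨κ, hκ, w, hw, hw1⟩ := h
  have hM : (1 : ℝ) ≤ M := by exact_mod_cast Nat.one_le_iff_ne_zero.2 (NeZero.ne M)
  have hA' : (1 : ℝ) ≤ A := by exact_mod_cast hA
  obtain ⟨s, hs0, hs1, hs⟩ : ∃ s : ℝ, 0 ≤ s ∧ s ≤ 1 ∧ M * (s * s) = 1 := by
    refine ⟨(√M)⁻¹, by positivity, inv_le_one_of_one_le₀ (Real.one_le_sqrt.2 hM), ?_⟩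
    rw [← mul_inv, Real.mul_self_sqrt (by positivity), mul_inv_cancel₀ (by positivity)]
  obtain ⟨r, hr0, hr⟩ : ∃ r : ℝ, 0 < r ∧ r ^ 2 = 200 * A :=
    ⟨√(200 * A), by positivity, Real.sq_sqrt (by positivity)⟩
  let b := idleVec κ M i₀
  let wv : X → Fin n → κ → ℝ := fun p i k => r * w p i k
  let wu : X → Fin n → κ → ℝ := fun p i k => r⁻¹ * w p i k
  let v : X → _ := fun p => b + symbolVec s 1 (val p) (wv p)
  let u : X → _ := fun p => b - symbolVec s (-1) (val p) (wu p)
  have hvu : ∀ p q, g p = false → g q = true → star (v p) ⬝ᵥ u q = 0 := by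
    intro p q hp hq
    have h1 := hw1 p q hp hq
    simp only [v, u, b, star_add, add_dotProduct, dotProduct_sub, idleVec_dotProduct_self,
      idleVec_dotProduct_symbolVec, symbolVec_dotProduct_idleVec, symbolVec_dotProduct]
    rw [add_zero, zero_add, sub_eq_zero]
    rw [← Complex.ofReal_one, Complex.ofReal_inj]
    refine h1.symm.trans (Finset.sum_congr rfl fun i _ => ?_)
    have h2 : ∑ k, wv p i k * wu q i k = ∑ k, w p i k * w q i k := by
      refine Finset.sum_congr rfl fun k _ => ?_
      simp only [wv, wu]
      field_simp
    rw [h2, hs]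
    split_ifs <;> ring
  obtain ⟨PS, hS1, hS2, hS3, hS4⟩ := exists_projection (v '' {p | g p = false})
  obtain ⟨P0, hP1, hP2, hP3, hP4⟩ := exists_projection
    (Set.range fun w : Fin n → κ → ℝ => symbolVec s 1 (0 : Fin n → Fin M) w)
  refine ⟨κ, hκ, inferInstance, 1 - (2 : ℂ) • PS, 1 - (2 : ℂ) • P0,
    reflection_mem_unitaryGroup hS1 hS2, reflection_mem_unitaryGroup hP1 hP2, fun p => ?_⟩
  intro N O V
  have hON : O * N * O * N = 1 := query_neg_query_neg (val p)
  have hinv : ∀ x, (N * O * N).mulVec (O.mulVec x) = x := by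
    intro x
    have h1 : O * (N * O * N) = 1 := by rw [← hON]; simp only [mul_assoc]
    rw [Matrix.mulVec_mulVec, mul_eq_one_comm.1 h1, Matrix.one_mulVec]
  have hOb : O.mulVec b = b := permMat_queryPerm_mulVec_idleVec i₀ (val p)
  have hOs : ∀ q w, O.mulVec (symbolVec s q 0 w) = symbolVec s q (val p) w :=
    fun q w => permMat_queryPerm_mulVec_symbolVec s q (val p) w
  have hPb : P0.mulVec b = 0 := hP4 _ (by
    rintro _ ⟨w, rfl⟩
    exact symbolVec_dotProduct_idleVec ..)
  have hwle : ∀ c : ℝ, ∑ i, ∑ k, (c * w p i k) ^ 2 ≤ c ^ 2 * A := by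
    intro c
    simp only [mul_pow, ← Finset.mul_sum]
    exact mul_le_mul_of_nonneg_left (hw p) (sq_nonneg c)
  have hnormu : ∀ q w, l2norm (b + symbolVec s q (val p) w) ^ 2 =
      1 + l2norm (symbolVec s q (val p) w) ^ 2 := by
    intro q w
    have h := star_dotProduct_self (b + symbolVec s q (val p) w)
    simp only [star_add, add_dotProduct, dotProduct_add, b, idleVec_dotProduct_self,
      idleVec_dotProduct_symbolVec, symbolVec_dotProduct_idleVec, add_zero, zero_add] at h
    rw [star_dotProduct_self] at h
    exact_mod_cast h.symm
  constructor
  · intro hp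
    refine ⟨v p, ?_, ?_⟩
    · rw [hnormu, l2norm_symbolVec_sq, hs]
      have h1 := hwle r
      have h2 : 0 ≤ ∑ i, ∑ k, (r * w p i k) ^ 2 :=
        Finset.sum_nonneg fun i _ => Finset.sum_nonneg fun k _ => sq_nonneg _
      rw [hr] at h1
      change 1 + (1 + s * 1 + 1 * s + 1 * 1) * ∑ i, ∑ k, (r * w p i k) ^ 2 ≤ _
      nlinarith
    · have hL : (1 - (2 : ℂ) • PS).mulVec (v p) = - v p := by
        rw [Matrix.sub_mulVec, Matrix.smul_mulVec, hS3 _ ⟨p, hp, rfl⟩, Matrix.one_mulVec]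
        module
      have hv : v p = O.mulVec (b + symbolVec s 1 0 (wv p)) := by
        rw [Matrix.mulVec_add, hOb, hOs]
      have h3 : P0.mulVec (symbolVec s 1 0 (wv p)) = symbolVec s 1 0 (wv p) := hP3 _ ⟨_, rfl⟩
      rw [round_mulVec hON, hL]
      simp only [Matrix.mulVec_neg]
      nth_rw 3 [hv]
      rw [hinv, Matrix.mulVec_add, hPb, h3, zero_add, hOs]
      simp only [v, b]
      module
  · intro hp
    have hu : u p = O.mulVec (b - symbolVec s (-1) 0 (wu p)) := by
      rw [Matrix.mulVec_sub, hOb, hOs]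
    have hneg : u p = b + symbolVec s (-1) (val p) (fun i k => -r⁻¹ * w p i k) := by
      funext ⟨⟨i, a⟩, o⟩
      cases o <;> simp [u, wu, symbolVec, sub_eq_add_neg]
    have h3 : P0.mulVec (symbolVec s (-1) 0 (wu p)) = 0 := hP4 _ (by
      rintro _ ⟨w, rfl⟩
      rw [symbolVec_dotProduct, hs]
      simp)
    have hL : (1 - (2 : ℂ) • PS).mulVec (u p) = u p := by
      rw [Matrix.sub_mulVec, Matrix.smul_mulVec, hS4, Matrix.one_mulVec]
      · simp
      · rintro _ ⟨q, hq, rfl⟩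
        exact hvu q p hq hp
    refine ⟨u p, ?_, ?_, ?_⟩
    · rw [round_mulVec hON, hL]
      nth_rw 2 [hu]
      rw [hinv, Matrix.mulVec_sub, hPb, h3]
      simp
    · have h4 := hnormu (-1) (fun i k => -r⁻¹ * w p i k)
      rw [← hneg] at h4
      nlinarith [l2norm_nonneg (u p), sq_nonneg (l2norm (symbolVec s (-1) (val p)
        (fun i k => -r⁻¹ * w p i k)))]
    · have h5 : u p - b = symbolVec s (-1) (val p) (fun i k => -r⁻¹ * w p i k) := by
        rw [hneg, add_sub_cancel_left]
      refine l2norm_le_of_sq_le (by norm_num) ?_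
      rw [← l2norm_sq, h5, l2norm_symbolVec_sq, hs]
      have h1 := hwle (-r⁻¹)
      have h2 : 0 ≤ ∑ i, ∑ k, (-r⁻¹ * w p i k) ^ 2 :=
        Finset.sum_nonneg fun i _ => Finset.sum_nonneg fun k _ => sq_nonneg _
      have h6 : (-r⁻¹) ^ 2 * A = 1 / 200 := by
        rw [neg_sq, inv_pow, hr]
        field_simp
      nlinarith

/-- The dual adversary bound is an upper bound on quantum query complexity. -/
theorem DualFeasible.Qq_le {f : PartialFn (Fin n) fun _ => M} {A : ℕ} (hA : 1 ≤ A)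
    (h : DualFeasible val g A) (i₀ : Fin n)
    (hf : ∀ x b, f x = some b → ∃ p : X, val p = x ∧ g p = b) : Qq f ≤ 100 * A := by
  obtain ⟨κ, _, _, L, R, hL, hR, hV⟩ := h.exists_reflections hA i₀
  have hA' : (1 : ℝ) ≤ A := by exact_mod_cast hA
  obtain ⟨K, hK⟩ : ∃ K, K = 50 * A := ⟨_, rfl⟩
  have : NeZero K := ⟨by omega⟩
  obtain ⟨F, hF, hF0⟩ := exists_unitary_uniform_row K
  have hK0 : (0 : ℝ) < K := by rw [hK]; push_cast; linarith
  let N := permMat (negPerm n M (Option κ))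
  let O := fun x : Fin n → Fin M => permMat (queryPerm (α := fun _ => M) (Option κ) x)
  let b := idleVec κ M i₀
  let e : QIdx (Fin n) (fun _ => M) (Fintype.card (Option κ × Fin K)) ≃
      ((Σ _ : Fin n, Fin M) × Option κ) × Fin K :=
    (Equiv.prodCongr (Equiv.refl _) (Fintype.equivFin _).symm).trans (Equiv.prodAssoc _ _ _).symm
  let U := roundUnitary (K := K) L N R (Matrix.kroneckerMap (· * ·) 1 F)
  have hN : N ∈ Matrix.unitaryGroup _ ℂ := permMat_mem_unitaryGroup _
  have hU : ∀ t, U t ∈ Matrix.unitaryGroup _ ℂ :=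
    roundUnitary_mem_unitaryGroup hL hN hR (one_kronecker_mem_unitaryGroup hF)
  let init : ((Σ _ : Fin n, Fin M) × Option κ) × Fin K → ℂ :=
    fun j => (((√K)⁻¹ : ℝ) : ℂ) * b j.1
  have hb : ∑ h, ‖b h‖ ^ 2 = 1 := by
    have := star_dotProduct_self b
    rw [idleVec_dotProduct_self] at this
    rw [← l2norm_sq]
    exact_mod_cast this.symm
  have hinit : ∑ j, ‖init j‖ ^ 2 = 1 := by
    simp only [init, Fintype.sum_prod_type_right, norm_mul, mul_pow, ← Finset.mul_sum, hb]
    simp [hK0.ne']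
  have hOd : ∀ x, (Matrix.blockDiagonal fun _ : Fin K => O x) =
      permMat ((e.symm.trans (queryPerm (Fin _) x)).trans e) := by
    intro x
    ext ⟨⟨⟨i, a⟩, o⟩, τ⟩ ⟨⟨⟨i', a'⟩, o'⟩, τ'⟩
    by_cases h : τ = τ' <;> simp [Matrix.blockDiagonal_apply, permMat, O, e, queryPerm, h]
  rw [show 100 * A = 2 * K by omega]
  refine Nat.sInf_le (exists_qAlg_of_algorithm e (2 * K) U hU
    (fun x => Matrix.blockDiagonal fun _ => O x) hOd init hinit (fun j => j.2 = 0) ?_)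
  intro x c hx
  obtain ⟨p, rfl, rfl⟩ := hf x c hx
  set V := O (val p) * R * N * O (val p) * N * L with hVdef
  have hVu : V ∈ Matrix.unitaryGroup _ ℂ := by
    have hO : O (val p) ∈ Matrix.unitaryGroup _ ℂ := permMat_mem_unitaryGroup _
    exact mul_mem (mul_mem (mul_mem (mul_mem (mul_mem hO hR) hN) hO) hN) hL
  set ψ := (qProd U (Matrix.blockDiagonal fun _ => O (val p)) (2 * K)).mulVec init with hψ
  have hψ0 : ∀ h, ψ (h, 0) = (K : ℂ)⁻¹ * (∑ t ∈ Finset.range K, (V ^ t).mulVec b) h := by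
    intro h
    rw [hψ, qProd_roundUnitary _ (query_neg_query_neg (val p)) K le_rfl]
    simp only [roundUnitary, if_true]
    exact one_kronecker_mulVec_blockDiagonal_pow hF0 V b h
  have htot : ∑ j, ‖ψ j‖ ^ 2 = 1 := by
    rw [← l2norm_sq, hψ, l2norm_mulVec, l2norm_sq, hinit]
    refine qProd_mem_unitaryGroup hU ?_ _
    rw [hOd]
    exact permMat_mem_unitaryGroup _
  have hprob : (∑ j, if j.2 = 0 then ‖ψ j‖ ^ 2 else 0) =
      (l2norm (∑ t ∈ Finset.range K, (V ^ t).mulVec b) / K) ^ 2 := by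
    rw [div_pow, l2norm_sq, Fintype.sum_prod_type, Finset.sum_div]
    refine Finset.sum_congr rfl fun h _ => ?_
    rw [Finset.sum_ite_eq' Finset.univ 0 fun τ => ‖ψ (h, τ)‖ ^ 2]
    simp only [Finset.mem_univ, if_true, hψ0, norm_mul, norm_inv, mul_pow]
    simp [div_eq_inv_mul]
  cases hg : g p with
  | false =>
    obtain ⟨v, hv, hv'⟩ := (hV p).1 hg
    have h1 := l2norm_sum_pow_le hVu hv' K
    have h2 : (l2norm (∑ t ∈ Finset.range K, (V ^ t).mulVec b) / K) ^ 2 ≤ 1 / 3 := by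
      rw [div_pow, div_le_iff₀ (by positivity)]
      have h3 : l2norm (∑ t ∈ Finset.range K, (V ^ t).mulVec b) ^ 2 ≤ l2norm v ^ 2 :=
        pow_le_pow_left₀ (l2norm_nonneg _) h1 2
      have h4 : (K : ℝ) ^ 2 = 2500 * (A : ℝ) ^ 2 := by rw [hK]; push_cast; ring
      rw [h4]
      nlinarith
    have h5 : (∑ j, if decide (j.2 = 0) = false then ‖ψ j‖ ^ 2 else 0) =
        1 - ∑ j, if j.2 = 0 then ‖ψ j‖ ^ 2 else 0 := by
      rw [← htot, ← Finset.sum_sub_distrib]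
      refine Finset.sum_congr rfl fun j _ => ?_
      by_cases hj : j.2 = 0 <;> simp [hj]
    rw [h5, hprob]
    linarith
  | true =>
    obtain ⟨u, hu, hu1, hu2⟩ := (hV p).2 hg
    have h1 := le_l2norm_sum_pow hVu (b := b) hu K
    have h2 : (9 / 10 : ℝ) ≤ l2norm (∑ t ∈ Finset.range K, (V ^ t).mulVec b) / K := by
      rw [le_div_iff₀ hK0, mul_comm]
      refine le_trans (mul_le_mul_of_nonneg_left ?_ hK0.le) h1
      linarith
    simp only [decide_eq_true_eq]
    rw [hprob]
    nlinarith

end DualAlgorithm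

end QC

/-! ### Reading the whole input -/

namespace QC

section ReadAll

variable {ι : Type} {α : ι → ℕ}

/-- Exchange the answer to a query with the record of the queried symbol. -/
def recordPerm (ι : Type) (α : ι → ℕ) [DecidableEq ι] :
    Equiv.Perm ((Σ i : ι, Fin (α i)) × Input ι α) where
  toFun j := (⟨j.1.1, j.2 j.1.1⟩, Function.update j.2 j.1.1 j.1.2)
  invFun j := (⟨j.1.1, j.2 j.1.1⟩, Function.update j.2 j.1.1 j.1.2)
  left_inv := by rintro ⟨⟨i, a⟩, r⟩; simp
  right_inv := by rintro ⟨⟨i, a⟩, r⟩; simp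

/-- Permute the query position whenever the answer register is blank. -/
def movePerm [∀ i, NeZero (α i)] (π : Equiv.Perm ι) (ω : Type) :
    Equiv.Perm ((Σ i : ι, Fin (α i)) × ω) where
  toFun j := if j.1.2 = 0 then (⟨π j.1.1, 0⟩, j.2) else j
  invFun j := if j.1.2 = 0 then (⟨π.symm j.1.1, 0⟩, j.2) else j
  left_inv := by
    rintro ⟨⟨i, a⟩, r⟩
    rcases eq_or_ne a 0 with rfl | h
    · beta_reduce
      rw [if_pos rfl, if_pos rfl, Equiv.symm_apply_apply]
    · beta_reduce
      rw [if_neg h, if_neg h]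
  right_inv := by
    rintro ⟨⟨i, a⟩, r⟩
    rcases eq_or_ne a 0 with rfl | h
    · beta_reduce
      rw [if_pos rfl, if_pos rfl, Equiv.apply_symm_apply]
    · beta_reduce
      rw [if_neg h, if_neg h]

lemma permMat_mulVec_single {τ : Type} [Fintype τ] [DecidableEq τ] (σ : Equiv.Perm τ) (j : τ) :
    (permMat σ).mulVec (Pi.single j 1) = Pi.single (σ j) 1 := by
  rw [permMat_mulVec]
  funext i
  simp only [Pi.single_apply, Equiv.symm_apply_eq]

variable [Fintype ι] [DecidableEq ι]

/-- Every partial function is computed by some query algorithm. -/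
theorem exists_qAlg [Nonempty ι] [∀ i, NeZero (α i)] (f : PartialFn ι α) :
    ∃ A : QAlg ι α, ∀ x b, f x = some b → (2 : ℝ) / 3 ≤ A.outProb x (some b) := by
  classical
  let m := Fintype.card ι
  have hm : 0 < m := Fintype.card_pos
  let ε : ι ≃ Fin m := Fintype.equivFin ι
  let pos : ℕ → ι := fun t => ε.symm ⟨t % m, Nat.mod_lt _ hm⟩
  have hpos : ∀ t < m, ∀ j, j = pos t ↔ (ε j : ℕ) = t := by
    intro t ht j
    simp only [pos, Equiv.eq_symm_apply, Fin.ext_iff, Nat.mod_eq_of_lt ht]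
  let σ : ℕ → Equiv.Perm ((Σ i : ι, Fin (α i)) × Input ι α) := fun t =>
    (recordPerm ι α).trans (movePerm (Equiv.swap (pos (t - 1)) (pos t)) _)
  let U : ℕ → Matrix _ _ ℂ := fun t => if t = 0 then 1 else permMat (σ t)
  let O : Input ι α → Matrix _ _ ℂ := fun x => permMat (queryPerm (Input ι α) x)
  let e : QIdx ι α (Fintype.card (Input ι α)) ≃ (Σ i : ι, Fin (α i)) × Input ι α :=
    Equiv.prodCongr (Equiv.refl _) (Fintype.equivFin _).symm
  let init : (Σ i : ι, Fin (α i)) × Input ι α → ℂ := Pi.single (⟨pos 0, 0⟩, 0) 1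
  have hstate : ∀ x, ∀ t ≤ m, (qProd U (O x) t).mulVec init =
      Pi.single (⟨pos t, 0⟩, fun j => if (ε j : ℕ) < t then x j else 0) 1 := by
    intro x t
    induction t with
    | zero => intro _; simp only [qProd, U, if_true, Matrix.one_mulVec, init, Nat.not_lt_zero, if_false]; rfl
    | succ t ih =>
      intro ht
      have hrec : Function.update (fun j => if (ε j : ℕ) < t then x j else 0) (pos t) (x (pos t)) =
          fun j => if (ε j : ℕ) < t + 1 then x j else 0 := by
        funext j
        by_cases hj : j = pos t
        · subst hj
          simp [(hpos t ht _).1 rfl]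
        · have h1 : (ε j : ℕ) ≠ t := fun h => hj ((hpos t ht j).2 h)
          have h2 : (ε j : ℕ) < t + 1 ↔ (ε j : ℕ) < t := by omega
          simp [Function.update_of_ne hj, h2]
      have h0 : ¬ (ε (pos t) : ℕ) < t := by rw [(hpos t ht _).1 rfl]; exact lt_irrefl t
      simp only [qProd]
      rw [mul_assoc, ← Matrix.mulVec_mulVec, ← Matrix.mulVec_mulVec, ih (by omega)]
      simp only [U, O, if_neg (Nat.succ_ne_zero t), permMat_mulVec_single, σ, Equiv.trans_apply]
      have hs : (⟨Equiv.swap (pos t) (pos (t + 1)) (pos t), 0⟩ : Σ i : ι, Fin (α i)) =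
          ⟨pos (t + 1), 0⟩ := by rw [Equiv.swap_apply_left]
      congr 1
      simp [queryPerm, recordPerm, movePerm, h0, hrec, hs, -Sigma.mk.injEq]
  obtain ⟨A, -, hA⟩ := exists_qAlg_of_algorithm (f := f) e m U
    (fun t => by
      by_cases ht : t = 0
      · simp only [U, if_pos ht]; exact one_mem _
      · simp only [U, if_neg ht]; exact permMat_mem_unitaryGroup _) O
    (fun x => by
      refine congrArg permMat ?_
      ext1 ⟨⟨i, a⟩, r⟩
      simp [e, queryPerm])
    init
    (by simp [init, Pi.single_apply, apply_ite])
    (fun j => f j.2 = some true)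
    (by
      intro x b hx
      rw [hstate x m le_rfl]
      have hb : decide (f x = some true) = b := by cases b <;> simp [hx]
      rw [Finset.sum_eq_single (⟨pos m, 0⟩, x)]
      · norm_num [hb]
      · intro j _ hj
        simp [hj]
      · simp)
  exact ⟨A, hA⟩

end ReadAll

end QC

/-! ### Duality between dual adversary solutions and adversary matrices -/

namespace QC

section Duality

variable {n M : ℕ} {X : Type} {val : X → Fin n → Fin M} {g : X → Bool}

/-- Reading the input position by position is a dual adversary solution. -/
lemma dualFeasible_natCast (hval : ∀ x y, g x = false → g y = true → val x ≠ val y) :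
    DualFeasible val g n := by
  classical
  let pre : X → Fin n → Fin n → Option (Fin M) := fun x i j => if j < i then some (val x j) else none
  refine ⟨Fin n → Option (Fin M), inferInstance, fun x i k => if k = pre x i then 1 else 0, ?_, ?_⟩
  · intro x
    simp
  · intro x y hx hy
    have hpre : ∀ i, pre x i = pre y i ↔ ∀ j < i, val x j = val y j := by
      intro i
      simp only [funext_iff, pre]
      refine forall_congr' fun j => ?_
      by_cases h : j < i <;> simp [h]
    have hex : ∃ i, val x i ≠ val y i := by
      by_contra! hcon
      exact hval x y hx hy (funext hcon)
    obtain ⟨i, hi, hmin⟩ := WellFounded.has_min (wellFounded_lt (α := Fin n))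
      {i | val x i ≠ val y i} hex
    have hlt : ∀ j < i, val x j = val y j := fun j hj => by
      by_contra hcon
      exact hmin j hcon hj
    rw [Finset.sum_eq_single i]
    · rw [if_neg hi]
      simp [(hpre i).2 hlt]
    · intro j _ hj
      split_ifs with hxy
      · rfl
      · have hij : i < j := lt_of_le_of_ne (not_lt.1 fun h => hxy (hlt j h)) (Ne.symm hj)
        have : pre y j ≠ pre x j := fun h => hi ((hpre j).1 h.symm i hij)
        refine Finset.sum_eq_zero fun k _ => ?_
        by_cases hk : k = pre x j
        · simp [hk, this.symm]
        · simp [hk]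
    · simp

/-- The pairs `(G, d)` such that some family of vectors realizes the matrix `G` (supported on pairs
of a negative and a positive input) at cost at most `d`. -/
def dualCone (val : X → Fin n → Fin M) (g : X → Bool) : Set ((X → X → ℝ) × (X → ℝ)) :=
  {p | ∃ (κ : Type) (_ : Fintype κ) (w : X → Fin n → κ → ℝ),
    (∀ x y, p.1 x y = if g x = false ∧ g y = true then
      ∑ i, (if val x i = val y i then 0 else ∑ k, w x i k * w y i k) else 0) ∧
    ∀ x, ∑ i, ∑ k, w x i k ^ 2 ≤ p.2 x}

lemma add_mem_dualCone {p q : (X → X → ℝ) × (X → ℝ)} (hp : p ∈ dualCone val g)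
    (hq : q ∈ dualCone val g) : p + q ∈ dualCone val g := by
  obtain ⟨κ, _, w, hw, hw'⟩ := hp
  obtain ⟨κ', _, v, hv, hv'⟩ := hq
  refine ⟨κ ⊕ κ', inferInstance, fun x i => Sum.elim (w x i) (v x i), ?_, ?_⟩
  · intro x y
    simp only [Prod.fst_add, Pi.add_apply, hw, hv, Fintype.sum_sum_type, Sum.elim_inl, Sum.elim_inr]
    split_ifs
    · rw [← Finset.sum_add_distrib]
      refine Finset.sum_congr rfl fun i _ => ?_
      split_ifs <;> simp
    · simp
  · intro x
    simp only [Prod.snd_add, Pi.add_apply, Fintype.sum_sum_type, Sum.elim_inl, Sum.elim_inr,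
      Finset.sum_add_distrib]
    exact add_le_add (hw' x) (hv' x)

lemma smul_mem_dualCone {p : (X → X → ℝ) × (X → ℝ)} (hp : p ∈ dualCone val g) {t : ℝ}
    (ht : 0 ≤ t) : t • p ∈ dualCone val g := by
  obtain ⟨κ, _, w, hw, hw'⟩ := hp
  refine ⟨κ, inferInstance, fun x i k => √t * w x i k, ?_, ?_⟩
  · intro x y
    simp only [Prod.smul_fst, Pi.smul_apply, hw, smul_eq_mul]
    split_ifs
    · rw [Finset.mul_sum]
      refine Finset.sum_congr rfl fun i _ => ?_
      split_ifs
      · simp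
      · rw [Finset.mul_sum]
        refine Finset.sum_congr rfl fun k _ => ?_
        rw [mul_mul_mul_comm, Real.mul_self_sqrt ht]
    · simp
  · intro x
    simp only [Prod.smul_snd, Pi.smul_apply, smul_eq_mul, mul_pow, Real.sq_sqrt ht,
      ← Finset.mul_sum]
    exact mul_le_mul_of_nonneg_left (hw' x) ht

/-- Every matrix supported on pairs of a negative and a positive input can be realized. -/
lemma mem_dualCone_of_support [Fintype X]
    (hval : ∀ x y, g x = false → g y = true → val x ≠ val y)
    {G : X → X → ℝ} (hG : ∀ x y, ¬(g x = false ∧ g y = true) → G x y = 0) :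
    (G, fun _ => ∑ x, ∑ y, |G x y|) ∈ dualCone val g := by
  classical
  have hex : ∀ p : {p : X × X // g p.1 = false ∧ g p.2 = true}, ∃ i, val p.1.1 i ≠ val p.1.2 i := by
    intro p
    by_contra! hcon
    exact hval _ _ p.2.1 p.2.2 (funext hcon)
  choose pos hpos using hex
  let s : X → X → ℝ := fun x y => if 0 ≤ G x y then 1 else -1
  have hs2 : ∀ x y, s x y ^ 2 = 1 := by
    intro x y
    simp only [s]
    split_ifs <;> norm_num
  have hs : ∀ x y, √|G x y| * (s x y * √|G x y|) = G x y := by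
    intro x y
    rw [mul_left_comm, Real.mul_self_sqrt (abs_nonneg _)]
    simp only [s]
    split_ifs with h
    · rw [abs_of_nonneg h, one_mul]
    · rw [abs_of_neg (not_le.1 h)]; ring
  let r : X → {p : X × X // g p.1 = false ∧ g p.2 = true} → ℝ := fun z p =>
    if z = p.1.1 then √|G p.1.1 p.1.2| else if z = p.1.2 then s p.1.1 p.1.2 * √|G p.1.1 p.1.2| else 0
  refine ⟨_, inferInstance, fun z i p => if i = pos p then r z p else 0, ?_, ?_⟩
  · intro x y
    split_ifs with hxy
    · let p₀ : {p : X × X // g p.1 = false ∧ g p.2 = true} := ⟨(x, y), hxy⟩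
      have hne : y ≠ x := by
        rintro rfl
        simp [hxy.1] at hxy
      have hr0 : ∀ p, p ≠ p₀ → r x p * r y p = 0 := by
        intro p hp
        have h1 : x ≠ p.1.2 := by
          intro h
          have := p.2.2
          rw [← h, hxy.1] at this
          cases this
        have h2 : y ≠ p.1.1 := by
          intro h
          have := p.2.1
          rw [← h, hxy.2] at this
          cases this
        simp only [r, if_neg h1, if_neg h2]
        split_ifs with h3 h4
        · exact absurd (Subtype.ext (Prod.ext h3.symm h4.symm)) hp
        all_goals simp
      have hr1 : r x p₀ * r y p₀ = G x y := by
        simp only [r, p₀, if_true, if_neg hne, hs]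
      have hsum : ∀ i, ∑ p, (if i = pos p then r x p else 0) * (if i = pos p then r y p else 0) =
          if i = pos p₀ then G x y else 0 := by
        intro i
        rw [Finset.sum_eq_single p₀]
        · split_ifs
          · exact hr1
          · simp
        · intro p _ hp
          split_ifs
          · exact hr0 p hp
          · simp
        · simp
      simp only [hsum]
      rw [Finset.sum_eq_single (pos p₀)]
      · rw [if_neg (hpos p₀), if_pos rfl]
      · intro i _ hi
        simp [hi]
      · simp
    · exact hG x y hxy
  · intro x
    rw [Finset.sum_comm]
    have h1 : ∀ p, ∑ i, (if i = pos p then r x p else 0) ^ 2 ≤ |G p.1.1 p.1.2| := by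
      intro p
      rw [Finset.sum_eq_single (pos p) (by simp +contextual) (by simp), if_pos rfl]
      simp only [r]
      split_ifs
      · rw [Real.sq_sqrt (abs_nonneg _)]
      · rw [mul_pow, hs2, one_mul, Real.sq_sqrt (abs_nonneg _)]
      · simp
    refine (Finset.sum_le_sum fun p _ => h1 p).trans ?_
    change _ ≤ ∑ x, ∑ y, |G x y|
    rw [← Fintype.sum_prod_type' (f := fun x y => |G x y|), ← Fintype.sum_subtype_add_sum_subtype
      (fun p : X × X => g p.1 = false ∧ g p.2 = true)]
    exact le_add_of_nonneg_right (Finset.sum_nonneg fun p _ => abs_nonneg _)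

lemma zero_mem_dualCone {d : X → ℝ} (hd : ∀ x, 0 ≤ d x) : (0, d) ∈ dualCone val g :=
  ⟨Empty, inferInstance, fun _ _ => Empty.elim, by simp, by simpa using hd⟩

/-- If there is no dual adversary solution of cost `a`, then the all-ones matrix cannot even be
approximated at cost `a / 2`. -/
lemma notMem_closure_dualCone [Fintype X]
    (hval : ∀ x y, g x = false → g y = true → val x ≠ val y) {a : ℝ} (ha : 0 < a)
    (h : ¬ DualFeasible val g a) :
    ((fun x y => if g x = false ∧ g y = true then (1 : ℝ) else 0, fun _ => a / 2) :
      (X → X → ℝ) × (X → ℝ)) ∉ closure (dualCone val g) := by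
  intro hcl
  refine h ?_
  set J : X → X → ℝ := fun x y => if g x = false ∧ g y = true then (1 : ℝ) else 0 with hJ
  let c : ℝ := (Fintype.card X : ℝ) * Fintype.card X
  have hc : 0 ≤ c := by positivity
  obtain ⟨⟨G, d⟩, hGd, hdist⟩ := Metric.mem_closure_iff.1 hcl (a / (2 * (1 + c))) (by positivity)
  set ε := a / (2 * (1 + c)) with hε
  have hε' : ε * (1 + c) = a / 2 := by rw [hε]; field_simp
  have hε0 : 0 < ε := by positivity
  rw [Prod.dist_eq, max_lt_iff] at hdist
  have hd : ∀ x, d x ≤ a / 2 + ε := by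
    intro x
    have h1 := (dist_pi_lt_iff hε0).1 hdist.2 x
    rw [Real.dist_eq, abs_lt] at h1
    linarith [h1.1]
  have hG : ∀ x y, |(J - G) x y| ≤ ε := by
    intro x y
    have h1 := (dist_pi_lt_iff hε0).1 ((dist_pi_lt_iff hε0).1 hdist.1 x) y
    rw [Real.dist_eq] at h1
    exact h1.le
  have hsupp : ∀ x y, ¬(g x = false ∧ g y = true) → (J - G) x y = 0 := by
    obtain ⟨κ, _, w, hw, -⟩ := hGd
    intro x y hxy
    have h1 := hw x y
    rw [if_neg hxy] at h1
    simp only at h1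
    simp [hJ, h1, hxy]
  obtain ⟨κ, hκ, w, hw, hw'⟩ := add_mem_dualCone hGd (mem_dualCone_of_support hval hsupp)
  refine ⟨κ, hκ, w, fun x => (hw' x).trans ?_, ?_⟩
  · have h1 : ∑ x, ∑ y, |(J - G) x y| ≤ c * ε := by
      refine (Finset.sum_le_sum fun x _ => Finset.sum_le_sum fun y _ => hG x y).trans ?_
      simp [c, mul_assoc]
    change d x + ∑ x, ∑ y, |(J - G) x y| ≤ a
    linarith [hd x]
  · intro x y hx hy
    have h1 := hw x y
    rw [if_pos ⟨hx, hy⟩] at h1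
    rw [← h1]
    simp [hJ, hx, hy]

/-- A separating functional for the dual cone. -/
lemma exists_separating_matrix [Fintype X]
    (hval : ∀ x y, g x = false → g y = true → val x ≠ val y) {a : ℝ} (ha : 0 < a)
    (h : ¬ DualFeasible val g a) :
    ∃ (B : X → X → ℝ) (q : X → ℝ), (∀ x, 0 < q x) ∧
      (∀ x y, ¬(g x = false ∧ g y = true) → B x y = 0) ∧
      a / 2 * ∑ x, q x < ∑ x, ∑ y, B x y ∧
      ∀ (i : Fin n) (v : X → ℝ), ∑ x, ∑ y, (if val x i = val y i then 0 else B x y * (v x * v y)) ≤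
        ∑ x, q x * v x ^ 2 := by
  classical
  have hconv : Convex ℝ (dualCone val g) := fun p hp q hq s t hs ht _ =>
    add_mem_dualCone (smul_mem_dualCone hp hs) (smul_mem_dualCone hq ht)
  obtain ⟨F, u, hF, hFu⟩ := geometric_hahn_banach_closed_point hconv.closure isClosed_closure
    (notMem_closure_dualCone hval ha h)
  have hu : 0 < u := by
    have := hF _ (subset_closure (zero_mem_dualCone (d := 0) fun _ => le_rfl))
    rwa [show ((0, 0) : (X → X → ℝ) × (X → ℝ)) = 0 from rfl, map_zero] at this
  have hFle : ∀ p ∈ dualCone val g, F p ≤ 0 := by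
    intro p hp
    by_contra! hpos
    have h1 := hF _ (subset_closure (smul_mem_dualCone hp (t := u / F p) (by positivity)))
    rw [map_smul, smul_eq_mul, div_mul_cancel₀ _ hpos.ne'] at h1
    exact lt_irrefl _ h1
  let B : X → X → ℝ := fun x y => F (Pi.single x (Pi.single y 1), 0)
  let q : X → ℝ := fun x => -F (0, Pi.single x 1)
  have hFeq : ∀ G d, F (G, d) = ∑ x, ∑ y, B x y * G x y - ∑ x, q x * d x := by
    intro G d
    have h1 : ((G, d) : (X → X → ℝ) × (X → ℝ)) =
        ∑ x, ∑ y, G x y • ((Pi.single x (Pi.single y 1), 0) : (X → X → ℝ) × (X → ℝ)) +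
          ∑ x, d x • ((0, Pi.single x 1) : (X → X → ℝ) × (X → ℝ)) := by
      refine Prod.ext ?_ ?_
      · funext x y
        simp only [Prod.fst_add, Prod.fst_sum, Prod.smul_fst, Pi.add_apply, Finset.sum_apply,
          Pi.smul_apply, smul_zero, Finset.sum_const_zero, add_zero, Pi.zero_apply]
        rw [Finset.sum_eq_single x (by simp +contextual [eq_comm]) (by simp),
          Finset.sum_eq_single y (by simp +contextual [eq_comm]) (by simp)]
        simp
      · funext x
        simp [Prod.snd_sum, Finset.sum_apply, Pi.single_apply]
    rw [h1]
    simp only [map_add, map_sum, map_smul, smul_eq_mul, B, q, neg_mul, Finset.sum_neg_distrib,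
      sub_neg_eq_add]
    simp only [mul_comm]
  have hq : ∀ x, 0 ≤ q x := by
    intro x
    have := hFle _ (zero_mem_dualCone (val := val) (g := g) (d := Pi.single x 1) fun y => by
      by_cases hy : y = x
      · subst hy; simp
      · simp [hy])
    simpa [q] using this
  let B' : X → X → ℝ := fun x y => if g x = false ∧ g y = true then B x y else 0
  have hlt : a / 2 * ∑ x, q x < ∑ x, ∑ y, B' x y := by
    have h1 := hu.trans hFu
    rw [hFeq, ← Finset.sum_mul] at h1
    simp only [mul_ite, mul_one, mul_zero] at h1
    simp only [B']
    linarith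
  obtain ⟨ε, hε, hε'⟩ : ∃ ε : ℝ, 0 < ε ∧
      a / 2 * ∑ x, (q x + ε) < ∑ x, ∑ y, B' x y := by
    let c : ℝ := a / 2 * Fintype.card X
    have hc : 0 ≤ c := by positivity
    refine ⟨(∑ x, ∑ y, B' x y - a / 2 * ∑ x, q x) / (1 + c),
      div_pos (sub_pos.2 hlt) (by positivity), ?_⟩
    rw [Finset.sum_add_distrib, Finset.sum_const, Finset.card_univ, nsmul_eq_mul, mul_add,
      ← mul_assoc, ← lt_sub_iff_add_lt', ← mul_div_assoc, div_lt_iff₀ (by positivity)]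
    have := sub_pos.2 hlt
    change c * _ < _
    nlinarith
  refine ⟨B', fun x => q x + ε, fun x => by linarith [hq x], fun x y hxy => if_neg hxy, hε', ?_⟩
  intro i v
  have h1 := hFle _ (show ((fun x y => if g x = false ∧ g y = true then
      (if val x i = val y i then 0 else v x * v y) else 0, fun x => v x ^ 2) :
      (X → X → ℝ) × (X → ℝ)) ∈ dualCone val g from
    ⟨Unit, inferInstance, fun x j _ => if j = i then v x else 0, fun x y => by
      simp only
      refine if_congr Iff.rfl ?_ rfl
      rw [Finset.sum_eq_single i (by simp +contextual) (by simp)]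
      simp, fun x => by
      rw [Finset.sum_eq_single i (by simp +contextual) (by simp)]
      simp⟩)
  rw [hFeq] at h1
  have h2 : ∑ x, ∑ y, (if val x i = val y i then 0 else B' x y * (v x * v y)) =
      ∑ x, ∑ y, B x y * (if g x = false ∧ g y = true then
        (if val x i = val y i then 0 else v x * v y) else 0) := by
    refine Finset.sum_congr rfl fun x _ => Finset.sum_congr rfl fun y _ => ?_
    simp only [B']
    split_ifs <;> simp
  rw [h2]
  have h3 : ∑ x, q x * v x ^ 2 ≤ ∑ x, (q x + ε) * v x ^ 2 :=
    Finset.sum_le_sum fun x _ => mul_le_mul_of_nonneg_right (by linarith) (sq_nonneg _)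
  linarith

/-- Strong duality: if no dual adversary solution has cost `a`, then some adversary matrix `Γ` with
`‖Γ ∘ Dᵢ‖ ≤ 1` has norm at least `a / 2`. -/
theorem exists_adversary_matrix [Fintype X]
    (hval : ∀ x y, g x = false → g y = true → val x ≠ val y) {a : ℝ} (ha : 0 < a)
    (h : ¬ DualFeasible val g a) :
    ∃ (Γ : X → X → ℝ) (N : ℝ) (δ : X → ℝ), (∀ x y, Γ x y = Γ y x) ∧
      (∀ x y, g x = g y → Γ x y = 0) ∧ a / 2 ≤ N ∧ ∑ x, δ x ^ 2 = 1 ∧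
      ∑ x, ∑ y, Γ x y * (δ x * δ y) = N ∧
      (∀ v : X → ℝ, ∑ x, ∑ y, Γ x y * (v x * v y) ≤ N * ∑ x, v x ^ 2) ∧
      ∀ (i : Fin n) (v : X → ℝ),
        ∑ x, ∑ y, (if val x i = val y i then 0 else Γ x y * (v x * v y)) ≤ ∑ x, v x ^ 2 := by
  obtain ⟨B, q, hq, hB, hlt, hi⟩ := exists_separating_matrix hval ha h
  have hs : ∀ x, 0 < √(q x) := fun x => Real.sqrt_pos.2 (hq x)
  have hss : ∀ x, √(q x) ^ 2 = q x := fun x => Real.sq_sqrt (hq x).le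
  let Γ : X → X → ℝ := fun x y => (B x y + B y x) / (2 * (√(q x) * √(q y)))
  have hΓ : ∀ (c : X → X → ℝ) (v : X → ℝ), (∀ x y, c x y = c y x) →
      ∑ x, ∑ y, c x y * (Γ x y * (v x * v y)) =
        ∑ x, ∑ y, c x y * (B x y * (v x / √(q x) * (v y / √(q y)))) := by
    intro c v hc
    let t : X → X → ℝ := fun x y => c x y * (B x y * (v x / √(q x) * (v y / √(q y))))
    have h1 : ∀ x y, c x y * (Γ x y * (v x * v y)) = (t x y + t y x) / 2 := by
      intro x y
      have := (hs x).ne'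
      have := (hs y).ne'
      simp only [t, Γ, hc y x]
      field_simp
    have h2 : ∑ x, ∑ y, t y x = ∑ x, ∑ y, t x y := Finset.sum_comm
    simp only [h1, ← Finset.sum_div, Finset.sum_add_distrib, h2]
    simp only [t]
    ring
  let Qf : (X → ℝ) → ℝ := fun v => ∑ x, ∑ y, Γ x y * (v x * v y)
  have hsmul : ∀ (r : ℝ) v, Qf (fun x => r * v x) = r ^ 2 * Qf v := by
    intro r v
    simp only [Qf, Finset.mul_sum]
    exact Finset.sum_congr rfl fun x _ => Finset.sum_congr rfl fun y _ => by ring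
  have hX : Nonempty X := by
    by_contra hX
    rw [not_nonempty_iff] at hX
    simp at hlt
  have hQq : a / 2 * ∑ x, √(q x) ^ 2 < Qf fun x => √(q x) := by
    have h1 := hΓ (fun _ _ => 1) (fun x => √(q x)) fun _ _ => rfl
    simp only [one_mul, div_self (hs _).ne', mul_one] at h1
    simp only [Qf, h1, hss]
    exact hlt
  have hnz : 0 < ∑ x, √(q x) ^ 2 :=
    Finset.sum_pos (fun x _ => by have := hs x; positivity) Finset.univ_nonempty
  have hnormalize : ∀ v : X → ℝ, 0 < ∑ x, v x ^ 2 →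
      ∑ x, ((√(∑ x, v x ^ 2))⁻¹ * v x) ^ 2 = 1 := by
    intro v hv
    simp only [mul_pow, ← Finset.mul_sum, inv_pow, Real.sq_sqrt hv.le]
    exact inv_mul_cancel₀ hv.ne'
  have hcpt : IsCompact {v : X → ℝ | ∑ x, v x ^ 2 = 1} := by
    refine Metric.isCompact_of_isClosed_isBounded
      (isClosed_eq (by fun_prop) continuous_const) ?_
    refine (Metric.isBounded_closedBall (x := (0 : X → ℝ)) (r := 1)).subset fun v hv => ?_
    rw [mem_closedBall_zero_iff, pi_norm_le_iff_of_nonneg zero_le_one]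
    intro x
    rw [Real.norm_eq_abs, ← sq_le_one_iff_abs_le_one, ← (show ∑ x, v x ^ 2 = 1 from hv)]
    exact Finset.single_le_sum (f := fun x => v x ^ 2) (fun _ _ => sq_nonneg _) (Finset.mem_univ x)
  obtain ⟨δ, hδ, hmax⟩ := hcpt.exists_isMaxOn ⟨_, hnormalize _ hnz⟩
    (f := Qf) (Continuous.continuousOn (by fun_prop))
  have hle : ∀ v : X → ℝ, Qf v ≤ Qf δ * ∑ x, v x ^ 2 := by
    intro v
    rcases (Finset.sum_nonneg fun x _ => sq_nonneg (v x) : 0 ≤ ∑ x, v x ^ 2).eq_or_lt with h0 | h0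
    · have hv : ∀ x, v x = 0 := fun x => by
        have := (Finset.sum_eq_zero_iff_of_nonneg fun x _ => sq_nonneg (v x)).1 h0.symm x
          (Finset.mem_univ x)
        exact pow_eq_zero_iff two_ne_zero |>.1 this
      simp [Qf, hv]
    · have h1 := hmax (hnormalize v h0)
      simp only [Set.mem_ofPred_eq] at h1
      rwa [hsmul, inv_pow, Real.sq_sqrt h0.le, ← div_eq_inv_mul, div_le_iff₀ h0] at h1
  refine ⟨Γ, Qf δ, δ, ?_, ?_, ?_, hδ, rfl, hle, ?_⟩
  · intro x y
    simp only [Γ, add_comm (B y x), mul_comm (√(q y))]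
  · intro x y hxy
    have h1 : B x y = 0 := hB x y (by rw [hxy]; simp)
    have h2 : B y x = 0 := hB y x (by rw [hxy]; simp)
    simp [Γ, h1, h2]
  · exact le_of_mul_le_mul_right (hQq.le.trans (hle _)) hnz
  · intro i v
    have h1 := hΓ (fun x y => if val x i = val y i then 0 else 1) v fun x y => by
      simp only [eq_comm]
    simp only [ite_mul, zero_mul, one_mul] at h1
    rw [h1]
    refine (hi i _).trans (le_of_eq (Finset.sum_congr rfl fun x _ => ?_))
    rw [div_pow, hss, mul_div_cancel₀ _ (hq x).ne']

end Duality

end QC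

/-! ### Kernels and their quadratic forms on families of states -/

namespace QC

section Kernel

variable {Y τ : Type} [Fintype Y] [Fintype τ]

/-- The quadratic form `∑ K x y Re⟨Ψ x, Ψ y⟩` of a real kernel on a family of states. -/
noncomputable def kform (K : Matrix Y Y ℝ) (Ψ : Y → τ → ℂ) : ℝ :=
  ∑ x, ∑ y, K x y * (star (Ψ x) ⬝ᵥ Ψ y).re

lemma posSemidef_of_sum {K : Matrix Y Y ℝ} (hsymm : ∀ x y, K x y = K y x)
    (h : ∀ v : Y → ℝ, 0 ≤ ∑ x, ∑ y, K x y * (v x * v y)) : K.PosSemidef := by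
  refine Matrix.PosSemidef.of_dotProduct_mulVec_nonneg ?_ fun v => ?_
  · ext x y
    simp [hsymm x y]
  · refine (h v).trans_eq ?_
    simp only [dotProduct, Matrix.mulVec, Finset.mul_sum, Pi.star_apply, star_trivial]
    exact Finset.sum_congr rfl fun x _ => Finset.sum_congr rfl fun y _ => by ring

lemma sum_nonneg_of_posSemidef {K : Matrix Y Y ℝ} (hK : K.PosSemidef) (v : Y → ℝ) :
    0 ≤ ∑ x, ∑ y, K x y * (v x * v y) := by
  refine (hK.dotProduct_mulVec_nonneg v).trans_eq ?_
  simp only [dotProduct, Matrix.mulVec, Finset.mul_sum, Pi.star_apply, star_trivial]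
  exact Finset.sum_congr rfl fun x _ => Finset.sum_congr rfl fun y _ => by ring

lemma kform_eq_sum (K : Matrix Y Y ℝ) (Ψ : Y → τ → ℂ) :
    kform K Ψ = ∑ h, ∑ x, ∑ y, K x y * (star (Ψ x h) * Ψ y h).re := by
  rw [kform, Finset.sum_comm]
  simp only [dotProduct, Complex.re_sum, Pi.star_apply, Finset.mul_sum]
  rw [Finset.sum_comm]
  simp_rw [fun x => Finset.sum_comm (s := (Finset.univ : Finset Y)) (t := (Finset.univ : Finset τ))
    (f := fun y h => K x y * (star (Ψ x h) * Ψ y h).re)]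
  rw [Finset.sum_comm]

lemma kform_nonneg {K : Matrix Y Y ℝ} (hK : K.PosSemidef) (Ψ : Y → τ → ℂ) : 0 ≤ kform K Ψ := by
  rw [kform_eq_sum]
  refine Finset.sum_nonneg fun h _ => ?_
  have h1 := sum_nonneg_of_posSemidef hK fun x => (Ψ x h).re
  have h2 := sum_nonneg_of_posSemidef hK fun x => (Ψ x h).im
  refine (add_nonneg h1 h2).trans_eq ?_
  simp only [← Finset.sum_add_distrib]
  refine Finset.sum_congr rfl fun x _ => Finset.sum_congr rfl fun y _ => ?_
  simp
  ring

lemma kform_add (K L : Matrix Y Y ℝ) (Ψ : Y → τ → ℂ) :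
    kform (K + L) Ψ = kform K Ψ + kform L Ψ := by
  simp [kform, add_mul, Finset.sum_add_distrib]

lemma kform_sub (K L : Matrix Y Y ℝ) (Ψ : Y → τ → ℂ) :
    kform (K - L) Ψ = kform K Ψ - kform L Ψ := by
  simp [kform, sub_mul, Finset.sum_sub_distrib]

lemma kform_smul (a : ℝ) (K : Matrix Y Y ℝ) (Ψ : Y → τ → ℂ) :
    kform (a • K) Ψ = a * kform K Ψ := by
  simp [kform, mul_assoc, Finset.mul_sum]

lemma kform_mono {K L : Matrix Y Y ℝ} (h : (L - K).PosSemidef) (Ψ : Y → τ → ℂ) :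
    kform K Ψ ≤ kform L Ψ := by
  have := kform_nonneg h Ψ
  rw [kform_sub] at this
  linarith

lemma kform_congr {K : Matrix Y Y ℝ} {Ψ Ψ' : Y → τ → ℂ}
    (h : ∀ x y, K x y ≠ 0 → star (Ψ x) ⬝ᵥ Ψ y = star (Ψ' x) ⬝ᵥ Ψ' y) : kform K Ψ = kform K Ψ' := by
  refine Finset.sum_congr rfl fun x _ => Finset.sum_congr rfl fun y _ => ?_
  by_cases hK : K x y = 0
  · simp [hK]
  · rw [h x y hK]

lemma kform_mulVec [DecidableEq τ] (K : Matrix Y Y ℝ) {U : Matrix τ τ ℂ}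
    (hU : U ∈ Matrix.unitaryGroup τ ℂ) (Ψ : Y → τ → ℂ) :
    kform K (fun x => U.mulVec (Ψ x)) = kform K Ψ :=
  kform_congr fun _ _ _ => star_dotProduct_mulVec_unitary hU _ _

/-- Growth of a quadratic form under a change of states that preserves inner products between
states whose symbols `s` agree. -/
lemma kform_le_of_symbol {S : Type} (s : Y → S) {K K₀ E : Matrix Y Y ℝ} {θ : ℝ} (hθ : 0 ≤ θ)
    (hE : ∀ x y, s x ≠ s y → E x y = K x y) (hK₀ : ∀ x y, s x ≠ s y → K₀ x y = 0)
    (hsub : (θ • K₀ - E).PosSemidef) (hadd : (θ • K₀ + E).PosSemidef)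
    (hK : (K - K₀).PosSemidef) {Ψ Ψ' : Y → τ → ℂ}
    (hΨ : ∀ x y, s x = s y → star (Ψ' x) ⬝ᵥ Ψ' y = star (Ψ x) ⬝ᵥ Ψ y) :
    kform K Ψ' ≤ (1 + 2 * θ) * kform K Ψ := by
  have h1 : kform (K - E) Ψ' = kform (K - E) Ψ := kform_congr fun x y hxy => hΨ x y <| by
    by_contra hs
    exact hxy (by simp [hE x y hs])
  have h2 : kform K₀ Ψ' = kform K₀ Ψ := kform_congr fun x y hxy => hΨ x y <| by
    by_contra hs
    exact hxy (hK₀ x y hs)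
  have h3 := kform_nonneg hsub Ψ'
  have h4 := kform_nonneg hadd Ψ
  have h5 := mul_le_mul_of_nonneg_left (kform_mono hK Ψ) hθ
  rw [kform_sub, kform_sub] at h1
  rw [kform_sub, kform_smul] at h3
  rw [kform_add, kform_smul] at h4
  rw [h2] at h3
  linarith

end Kernel

/-! ### Products of kernels -/

section ProdKernel

variable {X : Type} {c : ℕ}

/-- The tensor product of kernels. -/
def prodKernel (k : Fin c → Matrix X X ℝ) : Matrix (Fin c → X) (Fin c → X) ℝ :=
  Matrix.of fun x y => ∏ l, k l (x l) (y l)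

lemma prodKernel_update (k : Fin c → Matrix X X ℝ) (l : Fin c) (m : Matrix X X ℝ)
    (x y : Fin c → X) : prodKernel (Function.update k l m) x y =
      m (x l) (y l) * ∏ j ∈ Finset.univ.erase l, k j (x j) (y j) := by
  rw [prodKernel, Matrix.of_apply, ← Finset.mul_prod_erase _ _ (Finset.mem_univ l),
    Function.update_self]
  congr 1
  refine Finset.prod_congr rfl fun j hj => ?_
  rw [Function.update_of_ne (Finset.ne_of_mem_erase hj)]

lemma posSemidef_prod_sub_prod [Finite X] {A B : Fin c → Matrix X X ℝ}
    (hA : ∀ l, (A l).PosSemidef) (hAB : ∀ l, (B l - A l).PosSemidef) (s : Finset (Fin c)) :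
    (Matrix.of fun x y : Fin c → X => ∏ l ∈ s, A l (x l) (y l)).PosSemidef ∧
    (Matrix.of fun x y : Fin c → X =>
      ∏ l ∈ s, B l (x l) (y l) - ∏ l ∈ s, A l (x l) (y l)).PosSemidef := by
  classical
  have := Fintype.ofFinite X
  induction s using Finset.induction_on with
  | empty =>
    refine ⟨?_, ?_⟩
    · refine posSemidef_of_sum (fun x y => rfl) fun v => ?_
      simp only [Finset.prod_empty, Matrix.of_apply, one_mul, ← Finset.mul_sum, ← Finset.sum_mul]
      exact mul_self_nonneg _
    · convert Matrix.PosSemidef.zero (n := Fin c → X) (R := ℝ)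
      ext x y
      simp
  | insert l s hl ih =>
    have lift : ∀ {m : Matrix X X ℝ}, m.PosSemidef →
        (m.submatrix (fun x : Fin c → X => x l) fun x : Fin c → X => x l).PosSemidef :=
      fun hm => hm.submatrix _
    have hB : (B l).PosSemidef := by simpa using (hAB l).add (hA l)
    have hprod : (Matrix.of fun x y : Fin c → X => ∏ j ∈ insert l s, A j (x j) (y j)) =
        ((A l).submatrix (fun x : Fin c → X => x l) fun x : Fin c → X => x l).hadamard
          (Matrix.of fun x y : Fin c → X => ∏ j ∈ s, A j (x j) (y j)) := by
      ext x y
      simp [Finset.prod_insert hl]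
    have hdiff : (Matrix.of fun x y : Fin c → X =>
          ∏ j ∈ insert l s, B j (x j) (y j) - ∏ j ∈ insert l s, A j (x j) (y j)) =
        ((B l).submatrix (fun x : Fin c → X => x l) fun x : Fin c → X => x l).hadamard
          (Matrix.of fun x y : Fin c → X => ∏ j ∈ s, B j (x j) (y j) - ∏ j ∈ s, A j (x j) (y j)) +
        ((B l - A l).submatrix (fun x : Fin c → X => x l) fun x : Fin c → X => x l).hadamard
          (Matrix.of fun x y : Fin c → X => ∏ j ∈ s, A j (x j) (y j)) := by
      ext x y
      simp only [Finset.prod_insert hl, Matrix.hadamard_apply, Matrix.add_apply, Matrix.of_apply,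
        Matrix.submatrix_apply, Matrix.sub_apply]
      ring
    rw [hprod, hdiff]
    exact ⟨(lift (hA l)).hadamard ih.1, ((lift hB).hadamard ih.2).add
      ((lift (hAB l)).hadamard ih.1)⟩

lemma posSemidef_prodKernel [Finite X] {A : Fin c → Matrix X X ℝ} (hA : ∀ l, (A l).PosSemidef) :
    (prodKernel A).PosSemidef :=
  (posSemidef_prod_sub_prod (B := A) hA (fun l => by
    rw [sub_self]; exact Matrix.PosSemidef.zero) Finset.univ).1

lemma posSemidef_prodKernel_sub [Finite X] {A B : Fin c → Matrix X X ℝ}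
    (hA : ∀ l, (A l).PosSemidef) (hAB : ∀ l, (B l - A l).PosSemidef) :
    (prodKernel B - prodKernel A).PosSemidef :=
  (posSemidef_prod_sub_prod hA hAB Finset.univ).2

end ProdKernel

end QC

/-! ### The single-copy kernel -/

namespace QC

section CopyKernel

variable {n M : ℕ} {X : Type} {val : X → Fin n → Fin M} {g : X → Bool}

lemma sum_diagonal_mul [Fintype X] [DecidableEq X] (d v : X → ℝ) :
    ∑ x, ∑ y, Matrix.diagonal d x y * (v x * v y) = ∑ x, d x * v x ^ 2 := by
  refine Finset.sum_congr rfl fun x _ => ?_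
  rw [Finset.sum_eq_single x]
  · rw [Matrix.diagonal_apply_eq]
    ring
  · intro y _ hy
    rw [Matrix.diagonal_apply_ne _ hy.symm, zero_mul]
  · simp

/-- If there is no dual adversary solution of value `a`, there is a kernel that starts at one,
dominates a large multiple of each promise class, and grows slowly with queries. -/
lemma exists_kernel [Fintype X] [DecidableEq X]
    (hval : ∀ x y, g x = false → g y = true → val x ≠ val y) {a : ℝ} (ha : 0 < a)
    (h : ¬ DualFeasible val g a) :
    ∃ (k : Matrix X X ℝ) (δ : X → ℝ), ∑ x, δ x ^ 2 = 1 ∧ ∑ x, ∑ y, k x y * (δ x * δ y) = 1 ∧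
      (k - 1).PosSemidef ∧
      (∀ b, (k - Matrix.diagonal fun x => if g x = b then (5 / 4 : ℝ) else 0).PosSemidef) ∧
      ∀ i, ((2 / (3 * a)) • (1 : Matrix X X ℝ) -
          Matrix.of fun x y => if val x i = val y i then 0 else k x y).PosSemidef ∧
        ((2 / (3 * a)) • (1 : Matrix X X ℝ) +
          Matrix.of fun x y => if val x i = val y i then 0 else k x y).PosSemidef := by
  obtain ⟨Γ, N, δ, hsymm, hg, hN, hδ, hΓδ, hmax, hquery⟩ := exists_adversary_matrix hval ha h
  have hN0 : 0 < N := by linarith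
  let k : Matrix X X ℝ := Matrix.diagonal (fun _ => 4 / 3) - (1 / (3 * N)) • Matrix.of Γ
  have hkform : ∀ v : X → ℝ, ∑ x, ∑ y, k x y * (v x * v y) =
      4 / 3 * ∑ x, v x ^ 2 - 1 / (3 * N) * ∑ x, ∑ y, Γ x y * (v x * v y) := by
    intro v
    rw [Finset.mul_sum, ← sum_diagonal_mul]
    simp only [k, Matrix.sub_apply, Matrix.smul_apply, Matrix.of_apply, sub_mul,
      Finset.sum_sub_distrib, Finset.mul_sum, smul_eq_mul, mul_assoc]
  have hdsymm : ∀ (d : X → ℝ) x y, Matrix.diagonal d x y = Matrix.diagonal d y x := by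
    intro d x y
    by_cases hxy : x = y
    · rw [hxy]
    · rw [Matrix.diagonal_apply_ne _ hxy, Matrix.diagonal_apply_ne _ (Ne.symm hxy)]
  have hksymm : ∀ x y, k x y = k y x := by
    intro x y
    simp only [k, Matrix.sub_apply, Matrix.smul_apply, Matrix.of_apply, hsymm x y]
    rw [hdsymm]
  have hbound : ∀ v : X → ℝ,
      1 / (3 * N) * ∑ x, ∑ y, Γ x y * (v x * v y) ≤ 1 / 3 * ∑ x, v x ^ 2 := by
    intro v
    calc _ ≤ 1 / (3 * N) * (N * ∑ x, v x ^ 2) :=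
          mul_le_mul_of_nonneg_left (hmax v) (by positivity)
      _ = _ := by field_simp
  refine ⟨k, δ, hδ, ?_, ?_, ?_, ?_⟩
  · rw [hkform, hδ, hΓδ]
    field_simp
    norm_num
  · rw [← Matrix.diagonal_one]
    refine posSemidef_of_sum (fun x y => ?_) fun v => ?_
    · rw [Matrix.sub_apply, Matrix.sub_apply, hksymm, hdsymm]
    · simp only [Matrix.sub_apply, sub_mul, Finset.sum_sub_distrib]
      rw [hkform, sum_diagonal_mul]
      simp only [one_mul]
      linarith [hbound v]
  · intro b
    refine posSemidef_of_sum (fun x y => ?_) fun v => ?_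
    · rw [Matrix.sub_apply, Matrix.sub_apply, hksymm, hdsymm]
    · simp only [Matrix.sub_apply, sub_mul, Finset.sum_sub_distrib]
      rw [hkform, sum_diagonal_mul]
      have hD := hbound fun x => (if g x = b then 1 / 2 else 2) * v x
      have hΓD : ∀ x y, Γ x y * ((if g x = b then 1 / 2 else 2) * v x *
          ((if g y = b then 1 / 2 else 2) * v y)) = Γ x y * (v x * v y) := by
        intro x y
        by_cases hxy : g x = g y
        · simp [hg x y hxy]
        · by_cases hx : g x = b
          · have hy : g y ≠ b := fun hy => hxy (hx.trans hy.symm)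
            rw [if_pos hx, if_neg hy]
            ring
          · have hy : g y = b := by
              revert hx hxy
              cases g x <;> cases g y <;> cases b <;> simp
            rw [if_neg hx, if_pos hy]
            ring
      simp only [hΓD] at hD
      have hdiag : 4 / 3 * ∑ x, v x ^ 2 - 1 / 3 * ∑ x, ((if g x = b then 1 / 2 else 2) * v x) ^ 2 =
          ∑ x, (if g x = b then (5 / 4 : ℝ) else 0) * v x ^ 2 := by
        rw [Finset.mul_sum, Finset.mul_sum, ← Finset.sum_sub_distrib]
        refine Finset.sum_congr rfl fun x _ => ?_
        split_ifs <;> ring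
      linarith
  · intro i
    let e : Matrix X X ℝ := Matrix.of fun x y => if val x i = val y i then 0 else k x y
    let S : (X → ℝ) → ℝ := fun v =>
      ∑ x, ∑ y, if val x i = val y i then 0 else Γ x y * (v x * v y)
    have hflip : ∀ v, S (fun x => (if g x then 1 else -1) * v x) = - S v := by
      intro v
      simp only [S, ← Finset.sum_neg_distrib]
      refine Finset.sum_congr rfl fun x _ => Finset.sum_congr rfl fun y _ => ?_
      split_ifs with h1 h2 h3 h3
      · simp
      · simp [hg x y (h2.trans h3.symm)]
      · ring
      · ring
      · simp [hg x y (by simp_all)]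
    have hlower : ∀ v, - S v ≤ ∑ x, v x ^ 2 := by
      intro v
      rw [← hflip]
      refine (hquery i _).trans_eq (Finset.sum_congr rfl fun x _ => ?_)
      split_ifs <;> ring
    have heform : ∀ v : X → ℝ, ∑ x, ∑ y, e x y * (v x * v y) = - (1 / (3 * N) * S v) := by
      intro v
      simp only [S, Finset.mul_sum, ← Finset.sum_neg_distrib]
      refine Finset.sum_congr rfl fun x _ => Finset.sum_congr rfl fun y _ => ?_
      simp only [e, Matrix.of_apply]
      split_ifs with hxy
      · simp
      · have : x ≠ y := fun hcon => hxy (by rw [hcon])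
        simp only [k, Matrix.sub_apply, Matrix.diagonal_apply_ne _ this, Matrix.smul_apply,
          Matrix.of_apply, smul_eq_mul]
        ring
    have hone : ∀ v : X → ℝ, ∑ x, ∑ y, ((2 / (3 * a)) • (1 : Matrix X X ℝ)) x y * (v x * v y) =
        2 / (3 * a) * ∑ x, v x ^ 2 := by
      intro v
      rw [← Matrix.diagonal_one, ← Matrix.diagonal_smul, sum_diagonal_mul, Finset.mul_sum]
      simp
    have hcmp : ∀ v : X → ℝ, 1 / (3 * N) * ∑ x, v x ^ 2 ≤ 2 / (3 * a) * ∑ x, v x ^ 2 := by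
      intro v
      refine mul_le_mul_of_nonneg_right ?_ (Finset.sum_nonneg fun x _ => sq_nonneg _)
      rw [div_le_div_iff₀ (by positivity) (by positivity)]
      linarith
    have hpos : 0 ≤ 1 / (3 * N) := by positivity
    have hesymm : ∀ x y, e x y = e y x := by
      intro x y
      simp only [e, Matrix.of_apply, hksymm x y, eq_comm]
    have honesymm : ∀ x y, (1 : Matrix X X ℝ) x y = (1 : Matrix X X ℝ) y x := by
      rw [← Matrix.diagonal_one]
      exact hdsymm _
    refine ⟨posSemidef_of_sum (K := (2 / (3 * a)) • 1 - e) (fun x y => ?_) fun v => ?_,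
      posSemidef_of_sum (K := (2 / (3 * a)) • 1 + e) (fun x y => ?_) fun v => ?_⟩
    · rw [Matrix.sub_apply, Matrix.sub_apply, Matrix.smul_apply, Matrix.smul_apply, hesymm,
        honesymm]
    · simp only [Matrix.sub_apply, sub_mul, Finset.sum_sub_distrib]
      rw [hone, heform]
      linarith [hcmp v, mul_le_mul_of_nonneg_left (hlower v) hpos]
    · rw [Matrix.add_apply, Matrix.add_apply, Matrix.smul_apply, Matrix.smul_apply, hesymm,
        honesymm]
    · simp only [Matrix.add_apply, add_mul, Finset.sum_add_distrib]
      rw [hone, heform]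
      linarith [hcmp v, mul_le_mul_of_nonneg_left (hquery i v) hpos]

end CopyKernel

end QC

/-! ### Restricting states to query positions and the hybrid argument -/

namespace QC

section Restrict

variable {ι : Type} [DecidableEq ι] {α : ι → ℕ} {W : ℕ}

/-- The component of a state querying positions in `S`. -/
def restrict (S : Finset ι) (v : QIdx ι α W → ℂ) : QIdx ι α W → ℂ :=
  fun h => if h.1.1 ∈ S then v h else 0

lemma restrict_smul (S : Finset ι) (a : ℂ) (v : QIdx ι α W → ℂ) :
    restrict S (a • v) = a • restrict S v := by
  funext h
  simp only [restrict, Pi.smul_apply]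
  split_ifs <;> simp

variable [Fintype ι]

lemma oracleMatrix_mulVec (x : Input ι α) (v : QIdx ι α W → ℂ) (h : QIdx ι α W) :
    (oracleMatrix W x).mulVec v h = v (⟨h.1.1, h.1.2 - x h.1.1⟩, h.2) := by
  rw [oracleMatrix_eq_permMat, permMat_mulVec]
  rfl

lemma restrict_oracleMatrix_mulVec (S : Finset ι) (x : Input ι α) (v : QIdx ι α W → ℂ) :
    restrict S ((oracleMatrix W x).mulVec v) = (oracleMatrix W x).mulVec (restrict S v) := by
  funext h
  simp only [restrict, oracleMatrix_mulVec]

lemma oracleMatrix_mulVec_restrict_congr {S : Finset ι} {x y : Input ι α}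
    (hxy : ∀ i ∈ S, x i = y i) (v : QIdx ι α W → ℂ) :
    (oracleMatrix W x).mulVec (restrict S v) = (oracleMatrix W y).mulVec (restrict S v) := by
  funext h
  simp only [restrict, oracleMatrix_mulVec]
  split_ifs with hS
  · rw [hxy _ hS]
  · rfl

lemma oracleMatrix_mulVec_sub {S : Finset ι} {x y : Input ι α}
    (hxy : ∀ i ∉ S, x i = y i) (v : QIdx ι α W → ℂ) :
    (oracleMatrix W x).mulVec v - (oracleMatrix W y).mulVec v =
      (oracleMatrix W x).mulVec (restrict S v) - (oracleMatrix W y).mulVec (restrict S v) := by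
  funext h
  simp only [restrict, oracleMatrix_mulVec, Pi.sub_apply]
  split_ifs with hS
  · rfl
  · rw [hxy _ hS]
    simp

/-- The hybrid argument: changing the input on `S` moves the final state by at most twice the total
amplitude with which the positions in `S` are queried. -/
lemma l2norm_qProd_sub_le {U : ℕ → Matrix (QIdx ι α W) (QIdx ι α W) ℂ}
    (hU : ∀ t, U t ∈ Matrix.unitaryGroup (QIdx ι α W) ℂ) {S : Finset ι} {x y : Input ι α}
    (hxy : ∀ i ∉ S, y i = x i) (v : QIdx ι α W → ℂ) (T : ℕ) :
    l2norm ((qProd U (oracleMatrix W y) T).mulVec v - (qProd U (oracleMatrix W x) T).mulVec v) ≤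
      ∑ t ∈ Finset.range T, 2 * l2norm (restrict S ((qProd U (oracleMatrix W x) t).mulVec v)) := by
  induction T with
  | zero => simp [qProd, l2norm]
  | succ T ih =>
    rw [Finset.sum_range_succ]
    set a := (qProd U (oracleMatrix W y) T).mulVec v with ha
    set b := (qProd U (oracleMatrix W x) T).mulVec v with hb
    have hstep : (qProd U (oracleMatrix W y) (T + 1)).mulVec v -
        (qProd U (oracleMatrix W x) (T + 1)).mulVec v =
        (U (T + 1)).mulVec ((oracleMatrix W y).mulVec (a - b) +
          ((oracleMatrix W y).mulVec (restrict S b) -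
            (oracleMatrix W x).mulVec (restrict S b))) := by
      rw [← oracleMatrix_mulVec_sub hxy, Matrix.mulVec_sub, sub_add_sub_cancel, Matrix.mulVec_sub]
      simp only [qProd, ha, hb, Matrix.mulVec_mulVec, Matrix.mul_assoc]
    rw [hstep, l2norm_mulVec (hU _)]
    refine (l2norm_add_le _ _).trans (add_le_add ?_ ?_)
    · rw [l2norm_mulVec (oracleMatrix_mem_unitaryGroup _ _)]
      exact ih
    · refine (l2norm_sub_le _ _).trans ?_
      rw [l2norm_mulVec (oracleMatrix_mem_unitaryGroup _ _),
        l2norm_mulVec (oracleMatrix_mem_unitaryGroup _ _), two_mul]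

lemma QAlg.l2norm_init (A : QAlg ι α) : l2norm A.init = 1 := by
  have h := l2norm_sq A.init
  rw [A.init_norm] at h
  exact (pow_eq_one_iff_of_nonneg (l2norm_nonneg _) two_ne_zero).1 h

lemma QAlg.l2norm_finalState (A : QAlg ι α) (x : Input ι α) : l2norm (A.finalState x) = 1 := by
  rw [QAlg.finalState, l2norm_mulVec (qProd_mem_unitaryGroup A.unitary
    (oracleMatrix_mem_unitaryGroup _ _) _), A.l2norm_init]

/-- An algorithm distinguishing two inputs must query the positions where they differ. -/
lemma QAlg.mul_sum_restrict_ge (A : QAlg ι α) {S : Finset ι} {x y : Input ι α}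
    (hxy : ∀ i ∉ S, y i = x i) (hx : (2 : ℝ) / 3 ≤ A.outProb x (some false))
    (hy : (2 : ℝ) / 3 ≤ A.outProb y (some true)) :
    1 / 144 ≤ A.T * ∑ t ∈ Finset.range A.T,
      l2norm (restrict S ((qProd A.U (oracleMatrix A.W x) t).mulVec A.init)) ^ 2 := by
  let P : (QIdx ι α A.W → ℂ) → QIdx ι α A.W → ℂ := fun v j => if A.out j = some true then v j else 0
  have hP : ∀ z, l2norm (P (A.finalState z)) ^ 2 = A.outProb z (some true) := by
    intro z
    rw [l2norm_sq, QAlg.outProb]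
    refine Finset.sum_congr rfl fun j _ => ?_
    simp only [P]
    split_ifs <;> simp
  have hPle : ∀ v, l2norm (P v) ≤ l2norm v := by
    intro v
    refine l2norm_le_of_sq_le (l2norm_nonneg _) ?_
    rw [l2norm_sq]
    refine Finset.sum_le_sum fun j _ => ?_
    simp only [P]
    split_ifs <;> simp
  have hPsub : P (A.finalState y) - P (A.finalState x) = P (A.finalState y - A.finalState x) := by
    funext j
    simp only [P, Pi.sub_apply]
    split_ifs <;> simp
  have hxt : A.outProb x (some true) ≤ 1 / 3 := by
    have hsum : A.outProb x (some true) + A.outProb x (some false) ≤ 1 := by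
      rw [← one_pow 2, ← A.l2norm_finalState x, l2norm_sq, QAlg.outProb, QAlg.outProb,
        ← Finset.sum_add_distrib]
      refine Finset.sum_le_sum fun j _ => ?_
      rcases A.out j with _ | b
      · simp
      · cases b <;> simp
    linarith
  have hdiff : 1 / 6 ≤ l2norm (A.finalState y - A.finalState x) := by
    have h1 := l2norm_le_add_sub (P (A.finalState y)) (P (A.finalState x))
    have h2 := hPle (A.finalState y - A.finalState x)
    have h3 := hP y
    have h4 := hP x
    have h5 := hPle (A.finalState y)
    have h6 := hPle (A.finalState x)
    rw [hPsub] at h1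
    rw [QAlg.l2norm_finalState] at h5 h6
    have h7 := l2norm_nonneg (P (A.finalState y))
    have h8 := l2norm_nonneg (P (A.finalState x))
    nlinarith
  have hhyb := hdiff.trans (l2norm_qProd_sub_le A.unitary hxy A.init A.T)
  rw [← Finset.mul_sum] at hhyb
  have hcs := sq_sum_le_card_mul_sum_sq (s := Finset.range A.T) (f := fun t =>
    l2norm (restrict S ((qProd A.U (oracleMatrix A.W x) t).mulVec A.init)))
  rw [Finset.card_range] at hcs
  refine le_trans ?_ hcs
  nlinarith

end Restrict

/-! ### Growth of a kernel form along an algorithm -/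

section Progress

variable {ι : Type} [Fintype ι] [DecidableEq ι] {α : ι → ℕ} {W : ℕ} {Y : Type} [Fintype Y]

lemma kform_eq_sum_restrict (K : Matrix Y Y ℝ) (Ψ : Y → QIdx ι α W → ℂ) :
    kform K Ψ = ∑ i, kform K fun x => restrict {i} (Ψ x) := by
  simp only [kform_eq_sum]
  conv_rhs => rw [Finset.sum_comm]
  refine Finset.sum_congr rfl fun h _ => ?_
  rw [Finset.sum_eq_single h.1.1]
  · simp [restrict]
  · intro i _ hi
    simp [restrict, hi.symm]
  · simp

/-- A kernel form grows by a factor at most `1 + 2θ` with each query. -/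
lemma kform_oracleMatrix_le (z : Y → Input ι α) {K : Matrix Y Y ℝ} {θ : ℝ} (hθ : 0 ≤ θ)
    (hK : ∀ i, ∃ K₀ E : Matrix Y Y ℝ, (∀ x y, z x i ≠ z y i → E x y = K x y) ∧
      (∀ x y, z x i ≠ z y i → K₀ x y = 0) ∧ (θ • K₀ - E).PosSemidef ∧
      (θ • K₀ + E).PosSemidef ∧ (K - K₀).PosSemidef) (Ψ : Y → QIdx ι α W → ℂ) :
    kform K (fun x => (oracleMatrix W (z x)).mulVec (Ψ x)) ≤ (1 + 2 * θ) * kform K Ψ := by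
  rw [kform_eq_sum_restrict, kform_eq_sum_restrict K Ψ, Finset.mul_sum]
  refine Finset.sum_le_sum fun i _ => ?_
  obtain ⟨K₀, E, hE, hK₀, hsub, hadd, hKK⟩ := hK i
  refine kform_le_of_symbol (fun x => z x i) hθ hE hK₀ hsub hadd hKK fun x y hxy => ?_
  rw [restrict_oracleMatrix_mulVec, restrict_oracleMatrix_mulVec,
    oracleMatrix_mulVec_restrict_congr (x := z x) (y := z y) (by simpa using hxy),
    star_dotProduct_mulVec_unitary (oracleMatrix_mem_unitaryGroup _ _)]

lemma kform_qProd_le {U : ℕ → Matrix (QIdx ι α W) (QIdx ι α W) ℂ}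
    (hU : ∀ t, U t ∈ Matrix.unitaryGroup (QIdx ι α W) ℂ) (z : Y → Input ι α)
    {K : Matrix Y Y ℝ} {θ : ℝ} (hθ : 0 ≤ θ)
    (hK : ∀ i, ∃ K₀ E : Matrix Y Y ℝ, (∀ x y, z x i ≠ z y i → E x y = K x y) ∧
      (∀ x y, z x i ≠ z y i → K₀ x y = 0) ∧ (θ • K₀ - E).PosSemidef ∧
      (θ • K₀ + E).PosSemidef ∧ (K - K₀).PosSemidef) (Ψ : Y → QIdx ι α W → ℂ) (t : ℕ) :
    kform K (fun x => (qProd U (oracleMatrix W (z x)) t).mulVec (Ψ x)) ≤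
      (1 + 2 * θ) ^ t * kform K Ψ := by
  induction t with
  | zero => simp [qProd, kform_mulVec K (hU 0)]
  | succ t ih =>
    simp only [qProd, Matrix.mul_assoc, ← Matrix.mulVec_mulVec]
    rw [kform_mulVec K (hU _), pow_succ', mul_assoc]
    exact (kform_oracleMatrix_le z hθ hK _).trans (mul_le_mul_of_nonneg_left ih (by positivity))

/-- If `K` dominates `C` times each indicator of a class, the total weight that states place on
positions belonging to their own class is at most `1 / C` times the form of `K`. -/
lemma mul_sum_restrict_le_kform {B : Type} [DecidableEq B] (b : Y → B) (S : B → Finset ι)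
    (hS : ∀ i β β', i ∈ S β → i ∈ S β' → β = β') [DecidableEq Y] {K : Matrix Y Y ℝ} {C : ℝ}
    (hKpos : K.PosSemidef)
    (hK : ∀ β, (K - Matrix.diagonal fun x => if b x = β then C else 0).PosSemidef)
    (Ψ : Y → QIdx ι α W → ℂ) :
    C * ∑ x, l2norm (restrict (S (b x)) (Ψ x)) ^ 2 ≤ kform K Ψ := by
  have hK1 : kform K Ψ = ∑ h, kform K (fun x (_ : Unit) => Ψ x h) := by
    simp [kform_eq_sum]
  simp only [l2norm_sq]
  rw [hK1, Finset.sum_comm, Finset.mul_sum]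
  refine Finset.sum_le_sum fun h _ => ?_
  by_cases hex : ∃ β, h.1.1 ∈ S β
  · obtain ⟨β, hβ⟩ := hex
    refine le_trans (le_of_eq ?_) (kform_mono (hK β) _)
    rw [kform, Finset.mul_sum]
    refine Finset.sum_congr rfl fun x _ => ?_
    rw [Finset.sum_eq_single x]
    · rw [Matrix.diagonal_apply_eq, star_dotProduct_self, l2norm_sq, Complex.ofReal_re]
      by_cases hx : b x = β
      · simp [restrict, hx, hβ]
      · have : h.1.1 ∉ S (b x) := fun hcon => hx (hS _ _ _ hcon hβ)
        simp [restrict, hx, this]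
    · intro y _ hy
      rw [Matrix.diagonal_apply_ne _ hy.symm, zero_mul]
    · simp
  · push Not at hex
    simpa [restrict, hex] using kform_nonneg hKpos _

end Progress

end QC

/-! ### The lower bound for cheat sheet functions -/

namespace QC

section CheatSheet

lemma binToFin_injective (c : ℕ) : Function.Injective (binToFin c) := by
  have h : binToFin c = finFunctionFinEquiv ∘ fun b i => if b i then 1 else 0 := by
    funext b
    have hval : (finFunctionFinEquiv (fun i => if b i then (1 : Fin 2) else 0) : ℕ) =
        ∑ i, if b i then 2 ^ (i : ℕ) else 0 := by
      rw [finFunctionFinEquiv_apply]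
      refine Finset.sum_congr rfl fun i _ => ?_
      split_ifs <;> simp
    refine Fin.ext ?_
    rw [Function.comp_apply, hval, binToFin]
    refine Nat.mod_eq_of_lt ?_
    rw [← hval]
    exact Fin.is_lt _
  rw [h]
  refine finFunctionFinEquiv.injective.comp fun b b' hb => funext fun i => ?_
  have := congrFun hb i
  revert this
  cases b i <;> cases b' i <;> simp

/-- The cheat sheet input with given copies and cells. -/
def csInput {ι : Type} {α : ι → ℕ} {c k : ℕ} (x : Fin c → Input ι α)
    (y : Fin (2 ^ c) → Fin c → Fin k → Fin 2) : Input (CSIdx ι c k) (csAlphabet α c k)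
  | Sum.inl p => x p.1 p.2
  | Sum.inr q => y q.1 q.2.1 q.2.2

lemma sum_prod_eq_one {X : Type} [Fintype X] {c : ℕ} {F : X → ℝ} (hF : ∑ x, F x = 1) :
    ∑ x : Fin c → X, ∏ l, F (x l) = 1 := by
  rw [← Fintype.sum_pow, hF, one_pow]

lemma prodKernel_diagonal {X : Type} [DecidableEq X] {c : ℕ} (g : X → Bool) (β : Fin c → Bool)
    (r : ℝ) : prodKernel (fun l => Matrix.diagonal fun x => if g x = β l then r else 0) =
      Matrix.diagonal fun x : Fin c → X => if (fun l => g (x l)) = β then r ^ c else 0 := by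
  ext x y
  rw [prodKernel, Matrix.of_apply]
  by_cases hxy : x = y
  · subst hxy
    simp only [Matrix.diagonal_apply_eq]
    split_ifs with hβ
    · rw [← hβ]
      simp
    · obtain ⟨l, hl⟩ := Function.ne_iff.1 hβ
      exact Finset.prod_eq_zero (Finset.mem_univ l) (if_neg hl)
  · rw [Matrix.diagonal_apply_ne _ hxy]
    obtain ⟨l, hl⟩ := Function.ne_iff.1 hxy
    exact Finset.prod_eq_zero (Finset.mem_univ l) (Matrix.diagonal_apply_ne _ hl)

variable {n M k c : ℕ} {X : Type} {val : X → Fin n → Fin M} {g : X → Bool}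

/-- The power of a kernel that grows slowly with single-copy queries grows slowly with queries to
many copies. -/
lemma exists_prodKernel_query_bound [Fintype X] [DecidableEq X] {κ : Matrix X X ℝ} {θ : ℝ}
    (hκ : (κ - 1).PosSemidef)
    {i : Fin n} (hsub : (θ • (1 : Matrix X X ℝ) -
      Matrix.of fun x y => if val x i = val y i then 0 else κ x y).PosSemidef)
    (hadd : (θ • (1 : Matrix X X ℝ) +
      Matrix.of fun x y => if val x i = val y i then 0 else κ x y).PosSemidef) (l : Fin c) :
    ∃ K₀ E : Matrix (Fin c → X) (Fin c → X) ℝ,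
      (∀ x y, val (x l) i ≠ val (y l) i → E x y = prodKernel (fun _ => κ) x y) ∧
      (∀ x y, val (x l) i ≠ val (y l) i → K₀ x y = 0) ∧ (θ • K₀ - E).PosSemidef ∧
      (θ • K₀ + E).PosSemidef ∧ (prodKernel (fun _ => κ) - K₀).PosSemidef := by
  have hκ0 : κ.PosSemidef := by simpa using hκ.add Matrix.PosSemidef.one
  have hupdate : ∀ m : Matrix X X ℝ, m.PosSemidef →
      (prodKernel (Function.update (fun _ : Fin c => κ) l m)).PosSemidef := by
    intro m hm
    refine posSemidef_prodKernel fun j => ?_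
    by_cases hj : j = l
    · rw [hj, Function.update_self]
      exact hm
    · rw [Function.update_of_ne hj]
      exact hκ0
  refine ⟨prodKernel (Function.update (fun _ => κ) l 1), prodKernel (Function.update (fun _ => κ) l
    (Matrix.of fun x y => if val x i = val y i then 0 else κ x y)), ?_, ?_, ?_, ?_, ?_⟩
  · intro x y hxy
    rw [prodKernel_update, Matrix.of_apply, if_neg hxy]
    exact Finset.mul_prod_erase _ (fun j => κ (x j) (y j)) (Finset.mem_univ l)
  · intro x y hxy
    have : x l ≠ y l := fun hcon => hxy (by rw [hcon])
    rw [prodKernel_update, Matrix.one_apply_ne this, zero_mul]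
  · convert hupdate _ hsub using 1
    ext x y
    simp only [Matrix.sub_apply, Matrix.smul_apply, prodKernel_update, smul_eq_mul]
    ring
  · convert hupdate _ hadd using 1
    ext x y
    simp only [Matrix.add_apply, Matrix.smul_apply, prodKernel_update, smul_eq_mul]
    ring
  · refine posSemidef_prodKernel_sub (fun j => ?_) fun j => ?_
    · by_cases hj : j = l
      · rw [hj, Function.update_self]
        exact Matrix.PosSemidef.one
      · rw [Function.update_of_ne hj]
        exact hκ0
    · by_cases hj : j = l
      · rw [hj, Function.update_self]
        exact hκ
      · rw [Function.update_of_ne hj, sub_self]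
        exact Matrix.PosSemidef.zero

/-- If `f` has no dual adversary solution of value `a`, an algorithm for its cheat sheet version
makes either many queries or `Ω(a)` queries. -/
lemma pow_le_of_cheatSheet [Finite X] {hk : 0 < k} {f : PartialFn (Fin n) fun _ => M}
    {φ : Input (Fin n) (fun _ => M) → (Fin k → Fin 2) → Bool} (hφ : IsCertifying hk f φ)
    (hc : 0 < c) (hf : ∀ x, f (val x) = some (g x)) {a : ℝ} (ha : 0 < a)
    (h : ¬ DualFeasible val g a) (A : QAlg (CSIdx (Fin n) c k) (csAlphabet (fun _ => M) c k))
    (hA : ∀ z b, cheatSheet c f φ z = some b → (2 : ℝ) / 3 ≤ A.outProb z (some b)) :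
    (5 / 4 : ℝ) ^ c ≤ 144 * (A.T : ℝ) ^ 2 * (1 + 2 * (2 / (3 * a))) ^ A.T := by
  classical
  have := Fintype.ofFinite X
  have hval : ∀ x y, g x = false → g y = true → val x ≠ val y := by
    intro x y hx hy hxy
    have := hf x
    rw [hxy, hf y, hx, hy] at this
    simp at this
  obtain ⟨κ, δ, hδ, hκδ, hκ, hκb, hκq⟩ := exists_kernel hval ha h
  choose cert hcert using fun x => hφ.2.2.1 (val x) (g x) (hf x)
  let K : Matrix (Fin c → X) (Fin c → X) ℝ := prodKernel fun _ => κ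
  let d : (Fin c → X) → ℝ := fun x => ∏ l, δ (x l)
  let b : (Fin c → X) → Fin c → Bool := fun x l => g (x l)
  let S : (Fin c → Bool) → Finset (CSIdx (Fin n) c k) := fun β =>
    Finset.univ.filter fun i => ∃ q, i = Sum.inr (binToFin c β, q)
  let z₀ : (Fin c → X) → Input (CSIdx (Fin n) c k) (csAlphabet (fun _ => M) c k) := fun x =>
    csInput (fun l => val (x l)) fun _ _ _ => 0
  let z₁ : (Fin c → X) → Input (CSIdx (Fin n) c k) (csAlphabet (fun _ => M) c k) := fun x =>
    csInput (fun l => val (x l)) fun ℓ l => if ℓ = binToFin c (b x) then cert (x l) else fun _ => 0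
  have hz₀ : ∀ x, cheatSheet c f φ (z₀ x) = some false := by
    intro x
    simp only [cheatSheet, ofProp, Option.some.injEq, decide_eq_false_iff_not]
    rintro ⟨β, -, hacc⟩
    have h0 := hacc ⟨0, hc⟩
    rw [show csY (z₀ x) (binToFin c β) ⟨0, hc⟩ = fun _ => 0 from rfl, hφ.2.2.2] at h0
    simp at h0
  have hz₁ : ∀ x, cheatSheet c f φ (z₁ x) = some true := by
    intro x
    simp only [cheatSheet, ofProp, Option.some.injEq, decide_eq_true_eq]
    refine ⟨b x, fun l => hf (x l), fun l => ?_⟩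
    have : csY (z₁ x) (binToFin c (b x)) l = cert (x l) := by
      funext q
      change (if binToFin c (b x) = binToFin c (b x) then cert (x l) else fun _ => 0) q = _
      rw [if_pos rfl]
    rw [this]
    exact hcert (x l)
  have hz : ∀ x, ∀ i ∉ S (b x), z₁ x i = z₀ x i := by
    intro x i hi
    rcases i with p | ⟨ℓ, q⟩
    · rfl
    · change (if ℓ = binToFin c (b x) then cert (x q.1) else fun _ => 0) q.2 = 0
      rw [if_neg]
      rintro rfl
      exact hi (Finset.mem_filter.2 ⟨Finset.mem_univ _, q, rfl⟩)
  have hSdisj : ∀ i β β', i ∈ S β → i ∈ S β' → β = β' := by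
    intro i β β' hβ hβ'
    simp only [S, Finset.mem_filter, Finset.mem_univ, true_and] at hβ hβ'
    obtain ⟨q, rfl⟩ := hβ
    obtain ⟨q', hq'⟩ := hβ'
    exact binToFin_injective c (Prod.ext_iff.1 (Sum.inr.inj hq')).1
  have hκ0 : κ.PosSemidef := by simpa using hκ.add Matrix.PosSemidef.one
  have hKpos : K.PosSemidef := posSemidef_prodKernel fun _ => hκ0
  have hKb : ∀ β, (K - Matrix.diagonal fun x => if b x = β then (5 / 4 : ℝ) ^ c else 0).PosSemidef := by
    intro β
    rw [← prodKernel_diagonal]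
    refine posSemidef_prodKernel_sub (fun l => Matrix.PosSemidef.diagonal fun x => ?_)
      fun l => hκb (β l)
    rw [Pi.zero_apply]
    split_ifs <;> norm_num
  have hKq : ∀ i, ∃ K₀ E : Matrix (Fin c → X) (Fin c → X) ℝ,
      (∀ x y, z₀ x i ≠ z₀ y i → E x y = K x y) ∧ (∀ x y, z₀ x i ≠ z₀ y i → K₀ x y = 0) ∧
      ((2 / (3 * a)) • K₀ - E).PosSemidef ∧ ((2 / (3 * a)) • K₀ + E).PosSemidef ∧
      (K - K₀).PosSemidef := by
    rintro (⟨l, i⟩ | q)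
    · exact exists_prodKernel_query_bound hκ (hκq i).1 (hκq i).2 l
    · refine ⟨0, 0, fun x y hxy => absurd rfl hxy, fun _ _ _ => rfl, ?_, ?_, ?_⟩
      · simpa using Matrix.PosSemidef.zero
      · simpa using Matrix.PosSemidef.zero
      · simpa using hKpos
  let ψ : ℕ → (Fin c → X) → QIdx (CSIdx (Fin n) c k) (csAlphabet (fun _ => M) c k) A.W → ℂ :=
    fun t x => (qProd A.U (oracleMatrix A.W (z₀ x)) t).mulVec A.init
  have hstart : kform K (fun x => (d x : ℂ) • A.init) = 1 := by
    have hinner : ∀ x y, (star ((d x : ℂ) • A.init) ⬝ᵥ ((d y : ℂ) • A.init)).re = d x * d y := by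
      intro x y
      rw [star_smul, smul_dotProduct, dotProduct_smul, star_dotProduct_self, A.l2norm_init]
      simp
    have : ∑ p : Fin c → X × X, ∏ l, κ (p l).1 (p l).2 * (δ (p l).1 * δ (p l).2) = 1 :=
      sum_prod_eq_one (F := fun p : X × X => κ p.1 p.2 * (δ p.1 * δ p.2)) <| by
        rw [Fintype.sum_prod_type, hκδ]
    rw [← this, ← (Equiv.arrowProdEquivProdArrow _ _ _).symm.sum_comp, Fintype.sum_prod_type]
    refine Finset.sum_congr rfl fun x _ => Finset.sum_congr rfl fun y _ => ?_
    rw [hinner]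
    simp [K, d, prodKernel, Finset.prod_mul_distrib, Equiv.arrowProdEquivProdArrow]
  have hd : ∑ x, d x ^ 2 = 1 := by
    simp only [d, ← Finset.prod_pow]
    exact sum_prod_eq_one hδ
  have hθ : 0 ≤ 2 / (3 * a) := by positivity
  have hweight : ∀ t ∈ Finset.range A.T,
      (5 / 4 : ℝ) ^ c * ∑ x, d x ^ 2 * l2norm (restrict (S (b x)) (ψ t x)) ^ 2 ≤
        (1 + 2 * (2 / (3 * a))) ^ A.T := by
    intro t ht
    have h1 := mul_sum_restrict_le_kform b S hSdisj hKpos hKb fun x => (qProd A.U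
      (oracleMatrix A.W (z₀ x)) t).mulVec ((d x : ℂ) • A.init)
    have h2 := kform_qProd_le A.unitary z₀ hθ hKq (fun x => (d x : ℂ) • A.init) t
    rw [hstart, mul_one] at h2
    simp only [Matrix.mulVec_smul, restrict_smul, l2norm_smul, mul_pow, Complex.norm_real,
      Real.norm_eq_abs, sq_abs] at h1 h2
    refine (h1.trans h2).trans (pow_le_pow_right₀ (by linarith) (Finset.mem_range.1 ht).le)
  have hhybrid : 1 / 144 ≤ (A.T : ℝ) * ∑ t ∈ Finset.range A.T,
      ∑ x, d x ^ 2 * l2norm (restrict (S (b x)) (ψ t x)) ^ 2 := by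
    calc (1 / 144 : ℝ) = ∑ x, d x ^ 2 * (1 / 144) := by rw [← Finset.sum_mul, hd, one_mul]
      _ ≤ ∑ x, d x ^ 2 * (A.T * ∑ t ∈ Finset.range A.T,
          l2norm (restrict (S (b x)) (ψ t x)) ^ 2) :=
        Finset.sum_le_sum fun x _ => mul_le_mul_of_nonneg_left
          (A.mul_sum_restrict_ge (hz x) (hA _ _ (hz₀ x)) (hA _ _ (hz₁ x))) (sq_nonneg _)
      _ = _ := by
        simp only [Finset.mul_sum]
        rw [Finset.sum_comm]
        refine Finset.sum_congr rfl fun t _ => Finset.sum_congr rfl fun x _ => ?_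
        ring
  have hsum := Finset.sum_le_sum hweight
  rw [← Finset.mul_sum, Finset.sum_const, Finset.card_range, nsmul_eq_mul] at hsum
  have hT := mul_le_mul_of_nonneg_left hsum (Nat.cast_nonneg (α := ℝ) A.T)
  have hpow : (0 : ℝ) < (5 / 4) ^ c := by positivity
  nlinarith [mul_le_mul_of_nonneg_left hhybrid hpow.le]

end CheatSheet

end QC

/-! ### Combining the upper and lower bounds -/

namespace QC

section Combine

variable {n M : ℕ} {X : Type} {val : X → Fin n → Fin M} {g : X → Bool}

lemma DualFeasible.mono {a a' : ℝ} (h : DualFeasible val g a) (haa' : a ≤ a') :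
    DualFeasible val g a' := by
  obtain ⟨κ, _, w, hw, hc⟩ := h
  exact ⟨κ, _, w, fun x => (hw x).trans haa', hc⟩

lemma DualFeasible.one_le {a : ℝ} (h : DualFeasible val g a) {x y : X} (hx : g x = false)
    (hy : g y = true) : 1 ≤ a := by
  obtain ⟨κ, _, w, hw, hc⟩ := h
  have hle : ∑ i, (if val x i = val y i then 0 else ∑ k, w x i k * w y i k) ≤
      ∑ i, (∑ k, w x i k ^ 2 + ∑ k, w y i k ^ 2) / 2 := by
    refine Finset.sum_le_sum fun i _ => ?_
    split_ifs
    · exact div_nonneg (add_nonneg (Finset.sum_nonneg fun _ _ => sq_nonneg _)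
        (Finset.sum_nonneg fun _ _ => sq_nonneg _)) zero_le_two
    · rw [← Finset.sum_add_distrib, Finset.sum_div]
      exact Finset.sum_le_sum fun k _ => by linarith [two_mul_le_add_sq (w x i k) (w y i k)]
  rw [hc x y hx hy, ← Finset.sum_div, Finset.sum_add_distrib] at hle
  linarith [hw x, hw y]

/-- A function with positive query complexity takes both values. -/
lemma exists_eq_some_of_Qq_ne_zero {ι : Type} [Fintype ι] [DecidableEq ι] {α : ι → ℕ}
    {f : PartialFn ι α} (hf : Qq f ≠ 0) (b : Bool) : ∃ x, f x = some b := by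
  by_contra! hcon
  obtain ⟨_, A, -, -⟩ :=
    Set.nonempty_iff_ne_empty.2 fun h => hf (Nat.sInf_eq_zero.2 (Or.inr h))
  refine hf (Nat.sInf_eq_zero.2 (Or.inl
    ⟨{ A with T := 0, out := fun _ => some !b }, le_rfl, fun x b' hx => ?_⟩))
  obtain rfl : b' = !b := by
    have : b' ≠ b := fun h => hcon x (h ▸ hx)
    revert this
    cases b <;> cases b' <;> simp
  have h := QAlg.l2norm_finalState { A with T := 0, out := fun _ => some !b } x
  rw [QAlg.outProb]
  simp only [if_true]
  rw [← l2norm_sq, h]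
  norm_num

lemma cheatSheet_numeric {n T A L : ℕ} (hL : n < 2 ^ (L + 1)) (hAn : A ≤ n) (hA : 1 ≤ A)
    (hTA : 100 * T < A) :
    144 * (T : ℝ) ^ 2 * (1 + 2 * (2 / (3 * ((A : ℝ) / 2)))) ^ T < (5 / 4 : ℝ) ^ (10 * L) := by
  have hA' : (1 : ℝ) ≤ A := by exact_mod_cast hA
  have hTA' : 100 * (T : ℝ) < A := by exact_mod_cast hTA
  have hn : (A : ℝ) < 2 * 2 ^ L := by
    rw [← pow_succ']
    exact_mod_cast hAn.trans_lt hL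
  have hexp : (1 + 2 * (2 / (3 * ((A : ℝ) / 2)))) ^ T ≤ 2 := by
    have h1 : 1 + 2 * (2 / (3 * ((A : ℝ) / 2))) ≤ Real.exp (8 / (3 * A)) := by
      have := Real.add_one_le_exp (8 / (3 * (A : ℝ)))
      refine le_trans (le_of_eq ?_) this
      field_simp
      ring
    calc _ ≤ Real.exp (8 / (3 * A)) ^ T := pow_le_pow_left₀ (by positivity) h1 T
      _ = Real.exp (T * (8 / (3 * A))) := by rw [Real.exp_nat_mul]
      _ ≤ Real.exp (1 / 2) := by
        refine Real.exp_le_exp.2 ?_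
        rw [mul_div_assoc', div_le_div_iff₀ (by positivity) (by positivity)]
        linarith
      _ ≤ 2 := by
        have h := Real.exp_one_lt_d9
        rw [← sq_le_sq₀ (Real.exp_pos _).le zero_le_two, ← Real.exp_nat_mul]
        norm_num
        linarith
  have hTsq : (T : ℝ) ^ 2 ≤ (A : ℝ) ^ 2 / 10000 := by
    have := Nat.cast_nonneg (α := ℝ) T
    nlinarith
  have hAsq : (A : ℝ) ^ 2 ≤ 4 * 4 ^ L := by
    calc (A : ℝ) ^ 2 ≤ (2 * 2 ^ L) ^ 2 := pow_le_pow_left₀ (by positivity) hn.le 2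
      _ = 4 * 4 ^ L := by
        rw [mul_pow, ← pow_mul, mul_comm L, pow_mul]
        norm_num
  have hpow : (4 : ℝ) ^ L ≤ (5 / 4) ^ (10 * L) := by
    rw [pow_mul]
    exact pow_le_pow_left₀ (by norm_num) (by norm_num) L
  calc _ ≤ 144 * (T : ℝ) ^ 2 * 2 := mul_le_mul_of_nonneg_left hexp (by positivity)
    _ < (4 : ℝ) ^ L := by nlinarith [pow_pos (four_pos : (0 : ℝ) < 4) L]
    _ ≤ _ := hpow

end Combine

end QC

/-- For any partial `f : D → {0,1}` with `D ⊆ [M]^n` and any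
certifying function `φ` for `f`, the cheat sheet version of `f` with
`c = 10·log₂ n` copies satisfies `Q(f_CS) = Ω(Q(f))`. -/
theorem cheat_sheet_quantum_lower_bound :
    ∃ C : ℝ, 0 < C ∧ ∀ (n M k : ℕ) (hk : 0 < k)
      (f : QC.PartialFn (Fin n) fun _ => M)
      (φ : QC.Input (Fin n) (fun _ => M) → (Fin k → Fin 2) → Bool),
      QC.IsCertifying hk f φ → 2 ≤ n →
      C * (QC.Qq f : ℝ) ≤ (QC.Qq (QC.cheatSheet (10 * Nat.log 2 n) f φ) : ℝ) := by
  refine ⟨1 / 10000, by norm_num, fun n M k hk f φ hφ hn => ?_⟩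
  by_cases hQ : QC.Qq f = 0
  · simp [hQ]
  classical
  obtain ⟨x₀, hx₀⟩ := QC.exists_eq_some_of_Qq_ne_zero hQ false
  obtain ⟨x₁, hx₁⟩ := QC.exists_eq_some_of_Qq_ne_zero hQ true
  have : NeZero M := ⟨fun hM => (hM ▸ x₀ ⟨0, by omega⟩).elim0⟩
  let X : Type := {p : QC.Input (Fin n) (fun _ => M) × Bool // f p.1 = some p.2}
  let val : X → Fin n → Fin M := fun p => p.1.1
  let g : X → Bool := fun p => p.1.2
  have hf : ∀ x : X, f (val x) = some (g x) := fun x => x.2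
  have hval : ∀ x y, g x = false → g y = true → val x ≠ val y := by
    intro x y hx hy hxy
    have := hf x
    rw [hxy, hf y, hx, hy] at this
    simp at this
  have hone : ∀ a : ℝ, QC.DualFeasible val g a → 1 ≤ a := fun a h =>
    h.one_le (x := ⟨(x₀, false), hx₀⟩) (y := ⟨(x₁, true), hx₁⟩) rfl rfl
  have hex : ∃ m : ℕ, QC.DualFeasible val g m := ⟨n, QC.dualFeasible_natCast hval⟩
  set A := Nat.find hex
  have hAn : A ≤ n := Nat.find_min' hex (QC.dualFeasible_natCast hval)
  have hA1 : 1 ≤ A := by exact_mod_cast hone _ (Nat.find_spec hex)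
  have hupper : QC.Qq f ≤ 100 * A :=
    QC.DualFeasible.Qq_le hA1 (Nat.find_spec hex) ⟨0, by omega⟩
      fun x b hx => ⟨⟨(x, b), hx⟩, rfl, rfl⟩
  have hnot : ¬ QC.DualFeasible val g ((A : ℝ) / 2) := by
    intro hhalf
    have h1 := hone _ hhalf
    have hA2 : 2 ≤ A := by
      have : (2 : ℝ) ≤ A := by linarith
      exact_mod_cast this
    refine Nat.find_min hex (m := A - 1) (by omega) (hhalf.mono ?_)
    push_cast [hA1]
    linarith
  have hL : 0 < Nat.log 2 n := Nat.log_pos one_lt_two hn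
  have : Nonempty (QC.CSIdx (Fin n) (10 * Nat.log 2 n) k) :=
    ⟨Sum.inl (⟨0, by omega⟩, ⟨0, by omega⟩)⟩
  have : ∀ i, NeZero (QC.csAlphabet (fun _ : Fin n => M) (10 * Nat.log 2 n) k i) := by
    rintro (i | i)
    · exact ‹NeZero M›
    · exact ⟨two_ne_zero⟩
  obtain ⟨B, hBT, hB⟩ := Nat.sInf_mem (s := {d | ∃ A : QC.QAlg _ _, A.T ≤ d ∧
      ∀ x b, QC.cheatSheet (10 * Nat.log 2 n) f φ x = some b → (2 : ℝ) / 3 ≤ A.outProb x (some b)})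
    (by
      obtain ⟨B, hB⟩ := QC.exists_qAlg (QC.cheatSheet (10 * Nat.log 2 n) f φ)
      exact ⟨B.T, B, le_rfl, hB⟩)
  have hlower : A ≤ 100 * B.T := by
    by_contra! hlt
    exact absurd (QC.pow_le_of_cheatSheet hφ (by omega) hf (by positivity) hnot B hB)
      (not_le.2 (QC.cheatSheet_numeric (Nat.lt_pow_succ_log_self one_lt_two n) hAn hA1 hlt))
  have hfinal : QC.Qq f ≤ 10000 * QC.Qq (QC.cheatSheet (10 * Nat.log 2 n) f φ) := by
    have : B.T ≤ QC.Qq (QC.cheatSheet (10 * Nat.log 2 n) f φ) := hBT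
    omega
  have : (QC.Qq f : ℝ) ≤ 10000 * QC.Qq (QC.cheatSheet (10 * Nat.log 2 n) f φ) := by
    exact_mod_cast hfinal
  linarith
end

section
/- Let f : D → {0,1} be a partial function with D ⊆ [M]^n, and let φ be a certifying function for f. Then D(f) ≤ C^{(1)}(φ)² and C(f) ≤ C^{(1)}(φ). Consequently, D(f) ≤ D(φ)² and C(f) ≤ C(φ). -/
open scoped BigOperators ENNReal

namespace QC

section

variable {ι : Type} {α : ι → ℕ}

/-- Some decision tree of depth at most `d` computes `f` on the domain inputs lying in `P`. -/
def DecidesOn (f : PartialFn ι α) (P : Set (Input ι α)) (d : ℕ) : Prop :=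
  ∃ T : DTree ι α (Option Bool), T.depth ≤ d ∧ ∀ x ∈ P, ∀ b, f x = some b → T.eval x = some b

lemma DecidesOn.of_const {f : PartialFn ι α} {P : Set (Input ι α)} (d : ℕ) (v : Option Bool)
    (h : ∀ x ∈ P, ∀ b, f x = some b → v = some b) : DecidesOn f P d :=
  ⟨.leaf v, by simp [DTree.depth], by simpa [DTree.eval] using h⟩

lemma DecidesOn.query {f : PartialFn ι α} {P : Set (Input ι α)} {d : ℕ} (i : ι)
    (h : ∀ v : Fin (α i), DecidesOn f {x ∈ P | x i = v} d) : DecidesOn f P (d + 1) := by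
  choose T hT hTe using h
  refine ⟨.node i T, ?_, fun x hx b hb => hTe (x i) x ⟨hx, rfl⟩ b hb⟩
  simpa [DTree.depth] using hT

lemma DecidesOn.queryFinset [DecidableEq ι] {f : PartialFn ι α} {d : ℕ} (S : Finset ι) :
    ∀ {P : Set (Input ι α)}, (∀ a : Input ι α, DecidesOn f {x ∈ P | ∀ i ∈ S, x i = a i} d) →
      DecidesOn f P (d + S.card) := by
  induction S using Finset.induction_on with
  | empty =>
    intro P h
    rcases P.eq_empty_or_nonempty with rfl | ⟨a, -⟩
    · exact .of_const _ none (by simp)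
    · simpa using h a
  | insert i S hi ih =>
    intro P h
    rw [Finset.card_insert_of_notMem hi, ← add_assoc]
    refine .query i fun v => ih fun a => ?_
    obtain ⟨T, hT, hTe⟩ := h (Function.update a i v)
    refine ⟨T, hT, fun x hx => hTe x ⟨hx.1.1, fun j hj => ?_⟩⟩
    rcases Finset.mem_insert.1 hj with rfl | hj
    · simpa using hx.1.2
    · rw [Function.update_of_ne (ne_of_mem_of_not_mem hj hi)]
      exact hx.2 j hj

lemma decidesOn_univ_card [Fintype ι] [DecidableEq ι] (f : PartialFn ι α) :
    DecidesOn f Set.univ (Fintype.card ι) := by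
  have h : DecidesOn f Set.univ (0 + (Finset.univ : Finset ι).card) := by
    refine .queryFinset _ fun a => .of_const _ (f a) fun x hx b hb => ?_
    have hxa : x = a := funext fun i => hx.2 i (Finset.mem_univ i)
    rwa [← hxa]
  simpa using h

lemma Dq_le_of_decidesOn {f : PartialFn ι α} {d : ℕ} (h : DecidesOn f Set.univ d) : Dq f ≤ d := by
  obtain ⟨T, hT, hTe⟩ := h
  exact Nat.sInf_le ⟨T, hT, fun x => hTe x trivial⟩

lemma exists_dTree_depth_le_Dq [Fintype ι] [DecidableEq ι] (f : PartialFn ι α) :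
    ∃ T : DTree ι α (Option Bool), T.depth ≤ Dq f ∧ ∀ x b, f x = some b → T.eval x = some b := by
  obtain ⟨T, hT, hTe⟩ := decidesOn_univ_card f
  exact Nat.sInf_mem (s := {d | ∃ T : DTree ι α (Option Bool), T.depth ≤ d ∧
    ∀ x b, f x = some b → T.eval x = some b}) ⟨_, T, hT, fun x => hTe x trivial⟩

lemma DTree.exists_finset_eval_eq [DecidableEq ι] {L : Type} (T : DTree ι α L) (x : Input ι α) :
    ∃ S : Finset ι, S.card ≤ T.depth ∧ ∀ y : Input ι α, (∀ i ∈ S, y i = x i) →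
      T.eval y = T.eval x := by
  induction T with
  | leaf b => exact ⟨∅, by simp, fun _ _ => rfl⟩
  | node i child ih =>
    obtain ⟨S, hS, hSe⟩ := ih (x i)
    refine ⟨insert i S, (Finset.card_insert_le _ _).trans ?_, fun y hy => ?_⟩
    · have := Finset.le_sup (f := fun a => (child a).depth) (Finset.mem_univ (x i))
      simp only [DTree.depth]
      lia
    · simp only [DTree.eval]
      rw [hy i (Finset.mem_insert_self _ _)]
      exact hSe y fun j hj => hy j (Finset.mem_insert_of_mem hj)

/-- If every domain input has a certificate of size at most `c` that also forces membership in
the domain, then repeatedly querying a certificate of a 1-input consistent with the answers so far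
shrinks the unqueried part of every remaining certificate of a 0-input. -/
lemma decidesOn_of_certificates [DecidableEq ι] {f : PartialFn ι α} {c : ℕ}
    (S : Input ι α → Finset ι) (hcard : ∀ x b, f x = some b → (S x).card ≤ c)
    (hS : ∀ x b, f x = some b → ∀ y : Input ι α, (∀ i ∈ S x, y i = x i) → f y = some b)
    (r : ℕ) : ∀ (Q : Finset ι) (P : Set (Input ι α)),
      (∀ x ∈ P, ∀ y ∈ P, ∀ i ∈ Q, x i = y i) →
      (∀ x ∈ P, f x = some false → (S x \ Q).card ≤ r) → DecidesOn f P (r * c) := by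
  induction r with
  | zero =>
    intro Q P hP hr
    by_cases h1 : ∃ x ∈ P, f x = some true
    · obtain ⟨x₁, hx₁, hf₁⟩ := h1
      refine .of_const _ (some true) fun x hx b hb => ?_
      cases b
      · have hsub := hr x hx hb
        rw [Nat.le_zero, Finset.card_eq_zero, Finset.sdiff_eq_empty_iff_subset] at hsub
        have := hS x _ hb x₁ fun i hi => hP x₁ hx₁ x hx i (hsub hi)
        simp [hf₁] at this
      · rfl
    · refine .of_const _ (some false) fun x hx b hb => ?_
      cases b
      · rfl
      · exact absurd ⟨x, hx, hb⟩ h1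
  | succ r ih =>
    intro Q P hP hr
    by_cases h1 : ∃ x ∈ P, f x = some true
    · obtain ⟨x₁, hx₁, hf₁⟩ := h1
      have key : DecidesOn f P (r * c + (S x₁).card) := by
        refine .queryFinset _ fun a => ih (Q ∪ S x₁) _ ?_ ?_
        · intro x hx y hy i hi
          rcases Finset.mem_union.1 hi with hi | hi
          · exact hP x hx.1 y hy.1 i hi
          · rw [hx.2 i hi, hy.2 i hi]
        · intro x hx hfx
          obtain ⟨i, hi, hi₁, hne⟩ : ∃ i ∈ S x, i ∈ S x₁ ∧ x i ≠ x₁ i := by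
            by_contra! hcon
            let w : Input ι α := fun i => if i ∈ S x then x i else x₁ i
            have hw := hS x _ hfx w fun i hi => by simp [w, hi]
            have hw₁ := hS x₁ _ hf₁ w fun i hi => by
              by_cases hix : i ∈ S x
              · simp [w, hix, hcon i hix hi]
              · simp [w, hix]
            simp [hw] at hw₁
          have hiQ : i ∉ Q := fun hQ => hne (hP x hx.1 x₁ hx₁ i hQ)
          have hlt : (S x \ (Q ∪ S x₁)).card < (S x \ Q).card := by
            refine Finset.card_lt_card (Finset.ssubset_iff_subset_ne.2
              ⟨Finset.sdiff_subset_sdiff le_rfl Finset.subset_union_left, fun heq => ?_⟩)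
            have : i ∈ S x \ (Q ∪ S x₁) := heq ▸ Finset.mem_sdiff.2 ⟨hi, hiQ⟩
            simp [hi₁] at this
          have := hr x hx.1 hfx
          lia
      obtain ⟨T, hT, hTe⟩ := key
      refine ⟨T, hT.trans ?_, hTe⟩
      rw [Nat.succ_mul]
      exact Nat.add_le_add_left (hcard x₁ _ hf₁) _
    · refine .of_const _ (some false) fun x hx b hb => ?_
      cases b
      · rfl
      · exact absurd ⟨x, hx, hb⟩ h1

lemma CxAt_le_card [DecidableEq ι] {f : PartialFn ι α} {x : Input ι α} (S : Finset ι)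
    (hS : ∀ y : Input ι α, (∀ i ∈ S, y i = x i) → f y = none ∨ f y = f x) :
    CxAt f x ≤ S.card := by
  refine Nat.sInf_le ⟨fun i => if i ∈ S then some (x i) else none, ?_, ?_, ?_⟩
  · intro i v h
    dsimp only at h
    split_ifs at h
    exact Option.some.inj h
  · intro y hy
    refine hS y fun i hi => hy i (x i) (by simp [hi])
  · simp [certSize, apply_ite]

variable [Fintype ι]

lemma exists_finset_card_le_CxAt [DecidableEq ι] (f : PartialFn ι α) (x : Input ι α) :
    ∃ S : Finset ι, S.card ≤ CxAt f x ∧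
      ∀ y : Input ι α, (∀ i ∈ S, y i = x i) → f y = none ∨ f y = f x := by
  obtain ⟨ρ, hρ, hf, hs⟩ := Nat.sInf_mem (s := {s | ∃ ρ, Consistent ρ x ∧
    (∀ y, Consistent ρ y → f y = none ∨ f y = f x) ∧ certSize ρ ≤ s})
    ⟨_, fun i => some (x i), fun i v h => Option.some.inj h,
      fun y hy => .inr (congrArg f (funext fun i => hy i _ rfl)), le_rfl⟩
  refine ⟨Finset.univ.filter fun i => (ρ i).isSome, le_trans (le_of_eq ?_) hs, fun y hy => ?_⟩
  · rw [certSize, Nat.card_eq_fintype_card, Fintype.card_subtype]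
  · refine hf y fun i v hv => ?_
    rw [hy i (by simp [hv]), hρ i v hv]

lemma CxAt_le_card_univ [DecidableEq ι] (f : PartialFn ι α) (x : Input ι α) :
    CxAt f x ≤ Fintype.card ι :=
  CxAt_le_card Finset.univ fun _ hy => .inr (congrArg f (funext fun i => hy i (Finset.mem_univ i)))

lemma CxAt_le_C1q [DecidableEq ι] {f : PartialFn ι α} {x : Input ι α} (hx : f x = some true) :
    CxAt f x ≤ C1q f :=
  le_csSup ⟨Fintype.card ι, by rintro _ ⟨y, -, rfl⟩; exact CxAt_le_card_univ f y⟩ ⟨x, hx, rfl⟩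

lemma CxAt_le_Cq [DecidableEq ι] {f : PartialFn ι α} {x : Input ι α} (hx : f x ≠ none) :
    CxAt f x ≤ Cq f :=
  le_csSup ⟨Fintype.card ι, by rintro _ ⟨y, -, rfl⟩; exact CxAt_le_card_univ f y⟩ ⟨x, hx, rfl⟩

lemma C1q_le_Cq [DecidableEq ι] (f : PartialFn ι α) : C1q f ≤ Cq f := by
  refine csSup_le' ?_
  rintro _ ⟨x, hx, rfl⟩
  exact CxAt_le_Cq (by simp [hx])

lemma C1q_le_Dq [DecidableEq ι] {f : PartialFn ι α} (hf : TotalFn f) : C1q f ≤ Dq f := by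
  refine csSup_le' ?_
  rintro _ ⟨x, hx, rfl⟩
  obtain ⟨T, hT, hTe⟩ := exists_dTree_depth_le_Dq f
  obtain ⟨S, hS, hSe⟩ := T.exists_finset_eval_eq x
  refine (CxAt_le_card S fun y hy => .inr ?_).trans (hS.trans hT)
  obtain ⟨b, hb⟩ := Option.ne_none_iff_exists'.1 (hf y)
  rw [hb, hx, ← hTe y b hb, ← hTe x _ hx]
  exact hSe y hy

/-- A 1-certificate of `certFn φ`, restricted to the original input, certifies both membership
in the domain of `f` and the value of `f`. -/
lemma IsCertifying.exists_certificate [DecidableEq ι] {k : ℕ} {hk : 0 < k} {f : PartialFn ι α}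
    {φ : Input ι α → (Fin k → Fin 2) → Bool} (h : IsCertifying hk f φ) {x : Input ι α} {b : Bool}
    (hx : f x = some b) : ∃ S : Finset ι, S.card ≤ C1q (certFn φ) ∧
      ∀ x' : Input ι α, (∀ i ∈ S, x' i = x i) → f x' = some b := by
  obtain ⟨hdom, hval, hex, -⟩ := h
  obtain ⟨y, hy⟩ := hex x b hx
  let join : Input ι α → Input (CertIdx ι k) (certAlphabet α k) := fun x' j =>
    match j with
    | .inl i => x' i
    | .inr q => y q
  have hcert (x') : certFn φ (join x') = some (φ x' y) := rfl
  obtain ⟨S, hS, hSe⟩ := exists_finset_card_le_CxAt (certFn φ) (join x)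
  have hbit {x' b'} (hx' : f x' = some b') (hφ : φ x' y = true) :
      y ⟨0, hk⟩ = if b' then 1 else 0 := by
    by_contra hne
    simp [hval x' y b' hx' hne] at hφ
  refine ⟨S.toLeft, Finset.card_toLeft_le.trans (hS.trans (CxAt_le_C1q (by rw [hcert, hy]))),
    fun x' hx' => ?_⟩
  have hφ : φ x' y = true := by
    have := hSe (join x') (by
      rintro (i | q) hi
      · exact hx' i (Finset.mem_toLeft.2 hi)
      · rfl)
    simpa [hcert, hy] using this
  cases hfx : f x' with
  | none => simp [hdom x' y hfx] at hφ
  | some b' =>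
    have := (hbit hfx hφ).symm.trans (hbit hx hy)
    cases b <;> cases b' <;> simp_all

lemma IsCertifying.Dq_le [DecidableEq ι] {k : ℕ} {hk : 0 < k} {f : PartialFn ι α}
    {φ : Input ι α → (Fin k → Fin 2) → Bool} (h : IsCertifying hk f φ) :
    Dq f ≤ C1q (certFn φ) ^ 2 := by
  have hex (x : Input ι α) : ∃ S : Finset ι, ∀ b, f x = some b → S.card ≤ C1q (certFn φ) ∧
      ∀ x' : Input ι α, (∀ i ∈ S, x' i = x i) → f x' = some b := by
    cases hx : f x with
    | none => exact ⟨∅, by simp⟩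
    | some b =>
      obtain ⟨S, hS⟩ := h.exists_certificate hx
      exact ⟨S, fun b' hb => Option.some.inj hb ▸ hS⟩
  choose S hS using hex
  rw [sq]
  refine Dq_le_of_decidesOn (decidesOn_of_certificates S (fun x b hx => (hS x b hx).1)
    (fun x b hx => (hS x b hx).2) _ ∅ _ (by simp) fun x _ hx => ?_)
  simpa using (hS x _ hx).1

lemma IsCertifying.Cq_le [DecidableEq ι] {k : ℕ} {hk : 0 < k} {f : PartialFn ι α}
    {φ : Input ι α → (Fin k → Fin 2) → Bool} (h : IsCertifying hk f φ) :
    Cq f ≤ C1q (certFn φ) := by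
  refine csSup_le' ?_
  rintro _ ⟨x, hx, rfl⟩
  obtain ⟨b, hb⟩ := Option.ne_none_iff_exists'.1 hx
  obtain ⟨S, hS, hSe⟩ := h.exists_certificate hb
  exact (CxAt_le_card S fun y hy => .inr ((hSe y hy).trans hb.symm)).trans hS

end

end QC

/-- If `φ` is a certifying function for `f`, then
`D(f) ≤ C¹(φ)²`, `C(f) ≤ C¹(φ)`, and consequently `D(f) ≤ D(φ)²`, `C(f) ≤ C(φ)`. -/
theorem certifying_function_complexity_bounds :
    ∀ (n M k : ℕ) (hk : 0 < k)
      (f : QC.PartialFn (Fin n) fun _ => M)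
      (φ : QC.Input (Fin n) (fun _ => M) → (Fin k → Fin 2) → Bool),
      QC.IsCertifying hk f φ →
      QC.Dq f ≤ QC.C1q (QC.certFn φ) ^ 2 ∧
      QC.Cq f ≤ QC.C1q (QC.certFn φ) ∧
      QC.Dq f ≤ QC.Dq (QC.certFn φ) ^ 2 ∧
      QC.Cq f ≤ QC.Cq (QC.certFn φ) := by
  intro n M k hk f φ h
  have hD : QC.C1q (QC.certFn φ) ≤ QC.Dq (QC.certFn φ) :=
    QC.C1q_le_Dq fun _ => Option.some_ne_none _
  exact ⟨h.Dq_le, h.Cq_le, h.Dq_le.trans (Nat.pow_le_pow_left hD 2),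
    h.Cq_le.trans (QC.C1q_le_Cq _)⟩
end
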